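/- Let γ : I → ℝ³ be a C^∞ curve on an open interval I. If γ'(t₀), γ''(t₀), γ'''(t₀) are linearly dependent while γ'(t₀), γ''(t₀), γ⁽⁴⁾(t₀) are linearly independent, then the tangent surface f(t,s) = γ(t) + s γ'(t) is, as a germ at (t₀, 0) ∈ I × ℝ, diffeomorphic to the folded umbrella (t,s) ↦ (t+s, t²+2st, t⁴+4st³). -/

import Mathlib

open Set

noncomputable section

/-- `σ` is a `C^∞` diffeomorphism from the open set `U` onto its open image. -/
def SmoothDiffeoOn {E F : Type*} [NormedAddCommGroup E] [NormedSpace ℝ E]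
    [NormedAddCommGroup F] [NormedSpace ℝ F] (σ : E → F) (U : Set E) : Prop :=
  IsOpen U ∧ IsOpen (σ '' U) ∧ ContDiffOn ℝ (⊤ : ℕ∞) σ U ∧
    ∃ σinv : F → E, ContDiffOn ℝ (⊤ : ℕ∞) σinv (σ '' U) ∧ ∀ x ∈ U, σinv (σ x) = x

/-- The map-germ of `f` at `p` is diffeomorphic to the map-germ of `g` at `q`:
there are open neighborhoods `U ∋ p`, `V ∋ f p` and `C^∞` diffeomorphisms
`σ` from `U` onto an open neighborhood of `q`, `τ` from `V` onto an open
neighborhood of `g q`, with `σ p = q`, `τ (f p) = g q`, `f(U) ⊆ V` and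
`τ ∘ f = g ∘ σ` on `U`. -/
def GermDiffeomorphic {E F : Type*} [NormedAddCommGroup E] [NormedSpace ℝ E]
    [NormedAddCommGroup F] [NormedSpace ℝ F]
    (f : E → F) (p : E) (g : E → F) (q : E) : Prop :=
  ∃ (U : Set E) (V : Set F) (σ : E → E) (τ : F → F),
    SmoothDiffeoOn σ U ∧ SmoothDiffeoOn τ V ∧
    p ∈ U ∧ f p ∈ V ∧ σ p = q ∧ τ (f p) = g q ∧
    (∀ x ∈ U, f x ∈ V) ∧ ∀ x ∈ U, τ (f x) = g (σ x)

/-!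
A linear change of the target makes `γ' t₀`, `γ'' t₀`, `γ⁽⁴⁾ t₀` the coordinate vectors, so that the
curve is `(x, y, z)` with `x` a local parameter, `y` of order two and `z` of order four. The planar
map `(x + s x', y + s y')` is then a fold: tangent lines of a convex graph lie below it, and the
square root of the gap is a coordinate. In fold coordinates `(u, v)` the surface is `(u, v², Z)`
and its tangency to the osculating planes gives `∂Z/∂v = v F`, where the linear part of `F` in `v`
vanishes at the base point with nonzero derivative along `u`.

Whitney's division `F (u, v) = C₀ (u, v²) + v C₁ (u, v²)` then yields
`Z = P (u, v²) + v³ R (u, v²)` with `∂R/∂u ≠ 0`, and taking `R` as a coordinate brings the germ to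
the cuspidal cross cap `(u, v², u v³)`. The same normal form is reached from the folded umbrella by
a polynomial change of coordinates. The division comes from Fourier inversion, because `cos v` and
`v⁻¹ sin v` are smooth functions of `v²`.
-/

section

open MeasureTheory Filter
open scoped ContDiff Manifold Topology

section SmoothGerms

variable {E F G : Type*} [NormedAddCommGroup E] [NormedSpace ℝ E]
  [NormedAddCommGroup F] [NormedSpace ℝ F] [NormedAddCommGroup G] [NormedSpace ℝ G]

/-- `f` is `C^∞` on a neighbourhood of `p`. This is stronger than `ContDiffAt ℝ ∞ f p`, where the
neighbourhood on which `f` is `C^n` may depend on `n`. -/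
def SmoothNear (f : E → F) (p : E) : Prop :=
  ∀ᶠ x in 𝓝 p, ContDiffAt ℝ ∞ f x

namespace SmoothNear

variable {f : E → F} {p : E}

lemma of_contDiff (hf : ContDiff ℝ ∞ f) : SmoothNear f p :=
  Eventually.of_forall fun _ ↦ hf.contDiffAt

lemma contDiffAt (hf : SmoothNear f p) : ContDiffAt ℝ ∞ f p :=
  hf.self_of_nhds

lemma continuousAt (hf : SmoothNear f p) : ContinuousAt f p :=
  hf.contDiffAt.continuousAt

lemma comp {g : F → G} (hg : SmoothNear g (f p)) (hf : SmoothNear f p) :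
    SmoothNear (g ∘ f) p := by
  filter_upwards [hf, hf.continuousAt.eventually hg] with x hfx hgx using hgx.comp x hfx

lemma prodMk {g : E → G} (hf : SmoothNear f p) (hg : SmoothNear g p) :
    SmoothNear (fun x ↦ (f x, g x)) p := by
  filter_upwards [hf, hg] with x hfx hgx using hfx.prodMk hgx

lemma exists_contDiff_hasCompactSupport [FiniteDimensional ℝ E] (hf : SmoothNear f p) :
    ∃ g : E → F, ContDiff ℝ ∞ g ∧ HasCompactSupport g ∧ g =ᶠ[𝓝 p] f := by
  obtain ⟨r, hr, hball⟩ := Metric.nhds_basis_closedBall.eventually_iff.1 hf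
  let χ : ContDiffBump p := ⟨r / 2, r, half_pos hr, half_lt_self hr⟩
  refine ⟨fun x ↦ χ x • f x, contMDiff_iff_contDiff.1 (contMDiff_of_tsupport fun x hx ↦ ?_),
    χ.hasCompactSupport.smul_right, ?_⟩
  · have hxr : x ∈ Metric.closedBall p r := χ.tsupport_eq ▸ tsupport_smul_subset_left χ f hx
    exact (χ.contDiffAt.smul (hball hxr)).contMDiffAt
  · filter_upwards [χ.eventuallyEq_one] with x hx
    simp [hx]

end SmoothNear

lemma isLocalDiffeomorphAt_of_inverse {σ : E → F} {ρ : F → E} (hσ : ContDiff ℝ ∞ σ)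
    (hρ : ContDiff ℝ ∞ ρ) (hl : Function.LeftInverse ρ σ) (hr : Function.RightInverse ρ σ) (p : E) :
    IsLocalDiffeomorphAt 𝓘(ℝ, E) 𝓘(ℝ, F) ∞ σ p :=
  let Φ : Diffeomorph 𝓘(ℝ, E) 𝓘(ℝ, F) E F ∞ := ⟨⟨σ, ρ, hl, hr⟩, hσ.contMDiff, hρ.contMDiff⟩
  Φ.isLocalDiffeomorph p

lemma isLocalDiffeomorphAt_of_hasFDerivAt [CompleteSpace E] {σ : E → F} {p : E} {L : E ≃L[ℝ] F}
    (hσ : SmoothNear σ p) (hL : HasFDerivAt σ (L : E →L[ℝ] F) p) :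
    IsLocalDiffeomorphAt 𝓘(ℝ, E) 𝓘(ℝ, F) ∞ σ p := by
  have hbij : ∀ᶠ x in 𝓝 p, ∃ M : E ≃L[ℝ] F, (M : E →L[ℝ] F) = fderiv ℝ σ x := by
    have hcont : ContinuousAt (fderiv ℝ σ) p :=
      (hσ.contDiffAt.fderiv_right (m := 0) (by simp)).continuousAt
    exact hcont.eventually (hL.fderiv ▸ ContinuousLinearEquiv.nhds L)
  obtain ⟨W, hWsub, hW, hpW⟩ := mem_nhds_iff.1 (hσ.and hbij)
  let Φ := (hσ.contDiffAt.toOpenPartialHomeomorph σ hL (by simp)).restrOpen W hW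
  have hΦW : Φ.source ⊆ W := inter_subset_right
  refine ⟨{ Φ.toPartialEquiv with
    open_source := Φ.open_source
    open_target := Φ.open_target
    contMDiffOn_toFun := ContDiffOn.contMDiffOn fun x hx ↦ (hWsub (hΦW hx)).1.contDiffWithinAt
    contMDiffOn_invFun := ContDiffOn.contMDiffOn fun y hy ↦ ?_ }, ?_, eqOn_refl _ _⟩
  · obtain ⟨hsmooth, M, hM⟩ := hWsub (hΦW (Φ.map_target hy))
    have hderiv : HasFDerivAt Φ (M : E →L[ℝ] F) (Φ.symm y) :=
      hM ▸ (hsmooth.differentiableAt (by simp)).hasFDerivAt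
    exact (Φ.contDiffAt_symm hy hderiv hsmooth).contDiffWithinAt
  · exact ⟨hσ.contDiffAt.mem_toOpenPartialHomeomorph_source hL (by simp), hpW⟩

lemma isLocalDiffeomorphAt_of_injective [FiniteDimensional ℝ E] {σ : E → E} {p : E}
    {L : E →L[ℝ] E} (hσ : SmoothNear σ p) (hL : HasFDerivAt σ L p)
    (hinj : Function.Injective L) : IsLocalDiffeomorphAt 𝓘(ℝ, E) 𝓘(ℝ, E) ∞ σ p := by
  have := FiniteDimensional.complete ℝ E
  exact isLocalDiffeomorphAt_of_hasFDerivAt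
    (L := (LinearEquiv.ofInjectiveEndo L.toLinearMap hinj).toContinuousLinearEquiv) hσ hL

lemma exists_mem_nhds_smoothDiffeoOn {σ : E → F} {p : E}
    (hσ : IsLocalDiffeomorphAt 𝓘(ℝ, E) 𝓘(ℝ, F) ∞ σ p) :
    ∃ s ∈ 𝓝 p, ∀ U ⊆ s, IsOpen U → SmoothDiffeoOn σ U := by
  obtain ⟨Φ, hp, hΦ⟩ := hσ
  refine ⟨Φ.source, Φ.open_source.mem_nhds hp, fun U hU hUo ↦ ?_⟩
  have himage : σ '' U = Φ '' U := image_congr fun x hx ↦ hΦ (hU hx)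
  refine ⟨hUo, ?_, ?_, Φ.invFun, ?_, fun x hx ↦ ?_⟩
  · rw [himage]
    exact Φ.toOpenPartialHomeomorph.isOpen_image_of_subset_source hUo hU
  · exact (contMDiffOn_iff_contDiffOn.1 Φ.contMDiffOn_toFun).mono hU |>.congr fun x hx ↦ hΦ (hU hx)
  · refine (contMDiffOn_iff_contDiffOn.1 Φ.contMDiffOn_invFun).mono ?_
    rw [himage]
    exact (Φ.mapsTo.mono_left hU).image_subset
  · rw [hΦ (hU hx)]
    exact Φ.left_inv (hU hx)

lemma smoothNear_localInverse {σ : E → F} {p : E}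
    (hσ : IsLocalDiffeomorphAt 𝓘(ℝ, E) 𝓘(ℝ, F) ∞ σ p) : SmoothNear hσ.localInverse (σ p) := by
  filter_upwards [hσ.localInverse_open_source.mem_nhds hσ.localInverse_mem_source] with y hy
  exact (contMDiffOn_iff_contDiffOn.1 hσ.localInverse_contMDiffOn).contDiffAt
    (hσ.localInverse_open_source.mem_nhds hy)

end SmoothGerms

section GermEquiv

variable {E F E' F' E'' F'' : Type*} [NormedAddCommGroup E] [NormedSpace ℝ E]
  [NormedAddCommGroup F] [NormedSpace ℝ F] [NormedAddCommGroup E'] [NormedSpace ℝ E']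
  [NormedAddCommGroup F'] [NormedSpace ℝ F'] [NormedAddCommGroup E''] [NormedSpace ℝ E'']
  [NormedAddCommGroup F''] [NormedSpace ℝ F'']

/-- The germs of `f` at `p` and of `g` at `q` agree up to germs of `C^∞` diffeomorphisms of source
and target. This version of `GermDiffeomorphic` does not fix the domains of the
diffeomorphisms, so that equivalences compose without shrinking neighbourhoods by hand. -/
def GermEquiv (f : E → F) (p : E) (g : E' → F') (q : E') : Prop :=
  ∃ (σ : E → E') (τ : F → F'), IsLocalDiffeomorphAt 𝓘(ℝ, E) 𝓘(ℝ, E') ∞ σ p ∧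
    IsLocalDiffeomorphAt 𝓘(ℝ, F) 𝓘(ℝ, F') ∞ τ (f p) ∧ σ p = q ∧ τ ∘ f =ᶠ[𝓝 p] g ∘ σ

namespace GermEquiv

variable {f : E → F} {p : E}

lemma of_target_eq {g : E → F'} {τ : F → F'}
    (hτ : IsLocalDiffeomorphAt 𝓘(ℝ, F) 𝓘(ℝ, F') ∞ τ (f p)) (h : τ ∘ f =ᶠ[𝓝 p] g) :
    GermEquiv f p g p :=
  ⟨id, τ, (Diffeomorph.refl 𝓘(ℝ, E) E ∞).isLocalDiffeomorph _, hτ, rfl, h⟩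

lemma of_eventuallyEq {g : E → F} (h : f =ᶠ[𝓝 p] g) : GermEquiv f p g p :=
  of_target_eq ((Diffeomorph.refl 𝓘(ℝ, F) F ∞).isLocalDiffeomorph _) h

lemma trans {g : E' → F'} {q : E'} {h : E'' → F''} {r : E''} (hfg : GermEquiv f p g q)
    (hgh : GermEquiv g q h r) : GermEquiv f p h r := by
  obtain ⟨σ, τ, hσ, hτ, rfl, hτσ⟩ := hfg
  obtain ⟨σ', τ', hσ', hτ', rfl, hτσ'⟩ := hgh
  have hτp : g (σ p) = τ (f p) := hτσ.eq_of_nhds.symm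
  refine ⟨σ' ∘ σ, τ' ∘ τ, hσ.comp (K := 𝓘(ℝ, E'')) _ hσ',
    hτ.comp (K := 𝓘(ℝ, F'')) _ (hτp ▸ hτ'), rfl, ?_⟩
  filter_upwards [hτσ, hσ.contMDiffAt.continuousAt.eventually hτσ'] with x hx hx'
  exact (congrArg τ' hx).trans hx'

lemma germDiffeomorphic {f g : E → F} {p q : E} (h : GermEquiv f p g q) (hf : ContinuousAt f p) :
    GermDiffeomorphic f p g q := by
  obtain ⟨σ, τ, hσ, hτ, rfl, hτσ⟩ := h
  obtain ⟨s, hs, hσs⟩ := exists_mem_nhds_smoothDiffeoOn hσ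
  obtain ⟨t, ht, hτt⟩ := exists_mem_nhds_smoothDiffeoOn hτ
  obtain ⟨V, hVt, hV, hpV⟩ := mem_nhds_iff.1 ht
  obtain ⟨U, hU, hUo, hpU⟩ :=
    mem_nhds_iff.1 (inter_mem (inter_mem hs hτσ) (hf.preimage_mem_nhds (hV.mem_nhds hpV)))
  exact ⟨U, V, σ, τ, hσs U (fun x hx ↦ (hU hx).1.1) hUo, hτt V hVt hV, hpU, hpV, rfl,
    hτσ.eq_of_nhds, fun x hx ↦ (hU hx).2, fun x hx ↦ (hU hx).1.2⟩

end GermEquiv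

end GermEquiv

section IntervalIntegral

variable {E F : Type*} [NormedAddCommGroup E] [NormedSpace ℝ E] [NormedAddCommGroup F]
  [NormedSpace ℝ F]

lemma contDiff_intervalIntegral_unit {f : E → ℝ → F} (hf : ContDiff ℝ ∞ ↿f) :
    ContDiff ℝ ∞ fun x ↦ ∫ θ in (0 : ℝ)..1, f x θ := by
  let χ : ContDiffBump (0 : ℝ) := ⟨1, 2, one_pos, one_lt_two⟩
  let g : E → ℝ → F := fun x y ↦ χ y • f x (-y)
  have hg : ContDiff ℝ ∞ ↿g :=
    (χ.contDiff.comp contDiff_snd).smul (hf.comp (contDiff_fst.prodMk contDiff_snd.neg))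
  have hsupp : ∀ x, ∀ y ∉ Metric.closedBall (0 : ℝ) 2, g x y = 0 := fun x y hy ↦ by
    have hy' : y ∉ tsupport χ := χ.tsupport_eq ▸ hy
    simp only [g, image_eq_zero_of_notMem_tsupport hy', zero_smul]
  have hint : LocallyIntegrable (indicator (Ioc (0 : ℝ) 1) fun _ ↦ (1 : ℝ)) :=
    ((integrable_indicator_iff measurableSet_Ioc).2
      (integrableOn_const measure_Ioc_lt_top.ne)).locallyIntegrable
  have hconv := contDiffOn_convolution_right_with_param_comp (ContinuousLinearMap.lsmul ℝ ℝ)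
    (contDiffOn_const (c := (0 : ℝ))) isOpen_univ (isCompact_closedBall (0 : ℝ) 2)
    (fun x y _ ↦ hsupp x y) hint (n := ⊤) hg.contDiffOn
  convert contDiffOn_univ.1 hconv using 2 with x
  rw [convolution_def, intervalIntegral.integral_of_le zero_le_one,
    ← integral_indicator measurableSet_Ioc]
  refine integral_congr_ae (Eventually.of_forall fun θ ↦ ?_)
  by_cases hθ : θ ∈ Ioc (0 : ℝ) 1
  · have hχ : χ (-θ) = 1 := χ.one_of_mem_closedBall (by simpa [abs_of_pos hθ.1] using hθ.2)
    simp [g, hθ, hχ]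
  · simp [hθ]

end IntervalIntegral

universe u

section TemperateGrowth

open SchwartzMap

lemma hasTemperateGrowth_fderiv {E F : Type*} [NormedAddCommGroup E] [NormedSpace ℝ E]
    [NormedAddCommGroup F] [NormedSpace ℝ F] {f : E → F} (hf : f.HasTemperateGrowth) :
    (fderiv ℝ f).HasTemperateGrowth := by
  refine ⟨hf.1.fderiv_right le_rfl, fun n ↦ ?_⟩
  obtain ⟨k, C, hC⟩ := hf.2 (n + 1)
  exact ⟨k, C, fun x ↦ norm_iteratedFDeriv_fderiv.trans_le (hC x)⟩

lemma hasTemperateGrowth_fderiv_comp_inl {E V G : Type*} [NormedAddCommGroup E] [NormedSpace ℝ E]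
    [NormedAddCommGroup V] [NormedSpace ℝ V] [NormedAddCommGroup G] [NormedSpace ℝ G]
    {K : E × V → G} (hK : K.HasTemperateGrowth) :
    Function.HasTemperateGrowth fun q ↦ fderiv ℝ K q ∘L ContinuousLinearMap.inl ℝ E V :=
  ((ContinuousLinearMap.compL ℝ E (E × V) G).flip
    (ContinuousLinearMap.inl ℝ E V)).hasTemperateGrowth.comp (hasTemperateGrowth_fderiv hK)

variable {𝕜 V : Type*} {E G : Type*} [RCLike 𝕜] [NormedAddCommGroup V] [NormedSpace ℝ V]
  [MeasurableSpace V] [BorelSpace V] [SecondCountableTopology V]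
  [NormedAddCommGroup E] [NormedSpace ℝ E]
  [NormedAddCommGroup G] [NormedSpace ℝ G] [NormedSpace 𝕜 G]
  {μ : Measure V} [μ.HasTemperateGrowth]

lemma exists_integrable_bound_smul_on_ball (ψ : 𝓢(V, 𝕜)) {K : E × V → G}
    (hK : K.HasTemperateGrowth) (p : E) :
    ∃ b : V → ℝ, Integrable b μ ∧ ∀ w, ∀ x ∈ Metric.ball p 1, ‖ψ w • K (x, w)‖ ≤ b w := by
  obtain ⟨k, C, hC⟩ := hK.2 0
  have hψ : Integrable (fun w ↦ ‖ψ w‖ + ‖w‖ ^ k * ‖ψ w‖) μ :=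
    (ψ.integrable.norm).add (ψ.integrable_pow_mul μ k)
  have hC0 : 0 ≤ C := by simpa using (norm_nonneg _).trans (hC 0)
  refine ⟨_, hψ.const_mul (C * (2 + ‖p‖) ^ k * 2 ^ (k - 1)), fun w x hx ↦ ?_⟩
  have hxp : ‖x‖ ≤ 1 + ‖p‖ := by
    have := norm_le_norm_add_norm_sub' x p
    linarith [mem_ball_iff_norm.1 hx]
  have hxw : 1 + ‖(x, w)‖ ≤ (2 + ‖p‖) * (1 + ‖w‖) := by
    have hmax : ‖(x, w)‖ ≤ ‖x‖ + ‖w‖ := max_le_add_of_nonneg (norm_nonneg _) (norm_nonneg _)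
    nlinarith [mul_nonneg (norm_nonneg p) (norm_nonneg w), norm_nonneg w]
  have hpow : (1 + ‖w‖) ^ k ≤ 2 ^ (k - 1) * (1 + ‖w‖ ^ k) := by
    simpa using add_pow_le zero_le_one (norm_nonneg w) k
  calc ‖ψ w • K (x, w)‖ = ‖ψ w‖ * ‖K (x, w)‖ := norm_smul _ _
    _ ≤ ‖ψ w‖ * (C * ((2 + ‖p‖) * (1 + ‖w‖)) ^ k) := by
      gcongr
      simpa using (hC (x, w)).trans (by gcongr)
    _ = C * (2 + ‖p‖) ^ k * (1 + ‖w‖) ^ k * ‖ψ w‖ := by rw [mul_pow]; ring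
    _ ≤ C * (2 + ‖p‖) ^ k * (2 ^ (k - 1) * (1 + ‖w‖ ^ k)) * ‖ψ w‖ := by gcongr
    _ = C * (2 + ‖p‖) ^ k * 2 ^ (k - 1) * (‖ψ w‖ + ‖w‖ ^ k * ‖ψ w‖) := by ring

lemma integrable_schwartz_smul (ψ : 𝓢(V, 𝕜)) {K : E × V → G} (hK : K.HasTemperateGrowth) (p : E) :
    Integrable (fun w ↦ ψ w • K (p, w)) μ := by
  obtain ⟨b, hb, hKb⟩ := exists_integrable_bound_smul_on_ball (μ := μ) ψ hK p
  exact hb.mono' (ψ.continuous.smul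
    (hK.1.continuous.comp (Continuous.prodMk_right p))).aestronglyMeasurable
    (Eventually.of_forall fun w ↦ hKb w p (Metric.mem_ball_self one_pos))

lemma hasFDerivAt_integral_schwartz_smul (ψ : 𝓢(V, 𝕜)) {K : E × V → G}
    (hK : K.HasTemperateGrowth) (p : E) :
    HasFDerivAt (fun x ↦ ∫ w, ψ w • K (x, w) ∂μ)
      (∫ w, ψ w • (fderiv ℝ K (p, w) ∘L ContinuousLinearMap.inl ℝ E V) ∂μ) p := by
  have hK' := hasTemperateGrowth_fderiv_comp_inl hK
  obtain ⟨b, hb, hKb⟩ := exists_integrable_bound_smul_on_ball (μ := μ) ψ hK' p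
  refine hasFDerivAt_integral_of_dominated_of_fderiv_le (Metric.ball_mem_nhds p one_pos)
    (Eventually.of_forall fun x ↦ (integrable_schwartz_smul ψ hK x).aestronglyMeasurable)
    (integrable_schwartz_smul ψ hK p) (integrable_schwartz_smul ψ hK' p).aestronglyMeasurable
    (Eventually.of_forall hKb) hb (Eventually.of_forall fun w x _ ↦ ?_)
  have hKx : HasFDerivAt K (fderiv ℝ K (x, w)) (x, w) :=
    (hK.1.differentiable (by simp) _).hasFDerivAt
  exact (hKx.comp x (hasFDerivAt_prodMk_left x w)).const_smul (ψ w)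

-- One universe for `E` and `G`, because the induction replaces `G` by `E →L[ℝ] G`.
theorem contDiff_integral_schwartz_smul {E G : Type u} [NormedAddCommGroup E] [NormedSpace ℝ E]
    [NormedAddCommGroup G] [NormedSpace ℝ G] [NormedSpace 𝕜 G] [SMulCommClass ℝ 𝕜 G]
    (ψ : 𝓢(V, 𝕜)) {K : E × V → G} (hK : K.HasTemperateGrowth) :
    ContDiff ℝ ∞ fun x ↦ ∫ w, ψ w • K (x, w) ∂μ := by
  refine contDiff_infty.2 fun n ↦ ?_
  induction n generalizing G with
  | zero =>
    exact contDiff_zero.2 (continuous_iff_continuousAt.2 fun p ↦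
      (hasFDerivAt_integral_schwartz_smul ψ hK p).continuousAt)
  | succ n ih =>
    exact contDiff_succ_iff_hasFDerivAt.2
      ⟨_, ih (hasTemperateGrowth_fderiv_comp_inl hK), hasFDerivAt_integral_schwartz_smul ψ hK⟩

end TemperateGrowth

section CosSqrt

lemma exists_contDiff_comp_sq_eq_cos :
    ∃ C : ℝ → ℝ, ContDiff ℝ ∞ C ∧ ∀ v, C (v ^ 2) = Real.cos v := by
  let c : ℕ → ℝ := fun n ↦ (-1) ^ n / (2 * n).factorial
  have hradius : (FormalMultilinearSeries.ofScalars ℝ c).radius = ⊤ := by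
    refine FormalMultilinearSeries.radius_eq_top_of_summable_norm _ fun r ↦ ?_
    have hsum := (Real.summable_pow_div_factorial √r).comp_injective
      (mul_right_injective₀ (two_ne_zero (α := ℕ)))
    refine hsum.congr fun n ↦ ?_
    have hsqrt : √(r : ℝ) ^ (2 * n) = r ^ n := by rw [pow_mul, Real.sq_sqrt r.coe_nonneg]
    simp [c, hsqrt, div_eq_inv_mul]
  refine ⟨(FormalMultilinearSeries.ofScalars ℝ c).sum, ?_, fun v ↦ ?_⟩
  · have hball := ((FormalMultilinearSeries.ofScalars ℝ c).hasFPowerSeriesOnBall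
      (by simp [hradius])).analyticOnNhd
    rw [hradius, Metric.eball_top] at hball
    exact contDiffOn_univ.1 (hball.contDiffOn uniqueDiffOn_univ)
  · rw [← FormalMultilinearSeries.ofScalarsSum, FormalMultilinearSeries.ofScalars_sum_eq,
      Real.cos_eq_tsum]
    exact tsum_congr fun n ↦ by simp only [c, smul_eq_mul, pow_mul]; ring

section

variable {Φ : ℝ → ℝ}

lemma hasDerivAt_iteratedDeriv (hΦ : ContDiff ℝ ∞ Φ) (n : ℕ) (z : ℝ) :
    HasDerivAt (iteratedDeriv n Φ) (iteratedDeriv (n + 1) Φ z) z := by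
  rw [iteratedDeriv_succ]
  exact (hΦ.differentiable_iteratedDeriv n (by exact_mod_cast WithTop.coe_lt_top n) z).hasDerivAt

lemma sin_eq_of_comp_sq_eq_cos (hΦ : Differentiable ℝ Φ) (hcos : ∀ v, Φ (v ^ 2) = Real.cos v)
    (v : ℝ) : Real.sin v = -(2 * v * deriv Φ (v ^ 2)) := by
  have hcomp := (hΦ (v ^ 2)).hasDerivAt.comp (h := fun x ↦ x ^ 2) v (hasDerivAt_pow 2 v)
  rw [show (Φ ∘ fun x ↦ x ^ 2) = Real.cos from funext hcos] at hcomp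
  have hderiv : deriv Φ (v ^ 2) * (2 * v) = -Real.sin v := by
    simpa using hcomp.unique (Real.hasDerivAt_cos v)
  linear_combination hderiv

lemma iteratedDeriv_recurrence_of_comp_sq_eq_cos (hΦ : ContDiff ℝ ∞ Φ)
    (hcos : ∀ v, Φ (v ^ 2) = Real.cos v) (n : ℕ) {z : ℝ} (hz : 0 < z) :
    4 * z * iteratedDeriv (n + 2) Φ z =
      -((4 * n + 2) * iteratedDeriv (n + 1) Φ z + iteratedDeriv n Φ z) := by
  have hD := hasDerivAt_iteratedDeriv hΦ
  induction n generalizing z with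
  | zero =>
    obtain ⟨v, rfl⟩ : ∃ v, z = v ^ 2 := ⟨√z, (Real.sq_sqrt hz.le).symm⟩
    have hprod := ((hD 1 (v ^ 2)).comp (h := fun x ↦ x ^ 2) v (hasDerivAt_pow 2 v)).mul
      ((hasDerivAt_id v).const_mul 2)
    have hsin : ((iteratedDeriv 1 Φ ∘ fun x ↦ x ^ 2) * fun y ↦ 2 * id y) = -Real.sin := by
      ext y
      simp [sin_eq_of_comp_sq_eq_cos (hΦ.differentiable (by simp)) hcos y, mul_comm]
    rw [hsin] at hprod
    have hderiv : iteratedDeriv 2 Φ (v ^ 2) * (2 * v) * (2 * v) + iteratedDeriv 1 Φ (v ^ 2) * 2 =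
        -Real.cos v := by
      simpa using hprod.unique (Real.hasDerivAt_sin v).neg
    rw [iteratedDeriv_zero, hcos]
    linear_combination hderiv
  | succ n ih =>
    have hleft := ((hasDerivAt_id z).const_mul 4).mul (hD (n + 2) z)
    have hright := (((hD (n + 1) z).const_mul (4 * (n : ℝ) + 2)).add (hD n z)).neg
    have hnear : (fun y ↦ 4 * id y) * iteratedDeriv (n + 2) Φ =ᶠ[𝓝 z]
        -((fun y ↦ (4 * (n : ℝ) + 2) * iteratedDeriv (n + 1) Φ y) + iteratedDeriv n Φ) := by
      filter_upwards [lt_mem_nhds hz] with y hy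
      simpa using ih hy
    have hderiv : 4 * iteratedDeriv (n + 2) Φ z + 4 * z * iteratedDeriv (n + 3) Φ z =
        -((4 * n + 2) * iteratedDeriv (n + 2) Φ z + iteratedDeriv (n + 1) Φ z) := by
      simpa using (hleft.congr_of_eventuallyEq hnear.symm).unique hright
    push_cast
    linear_combination hderiv

-- `4zΦ⁽ⁿ⁺²⁾` is bounded by lower derivatives, so on `z ≥ 1` the bounds follow by induction.
lemma exists_bound_iteratedDeriv_of_comp_sq_eq_cos (hΦ : ContDiff ℝ ∞ Φ)
    (hcos : ∀ v, Φ (v ^ 2) = Real.cos v) (n : ℕ) :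
    ∃ B, ∀ z, 1 ≤ z → |iteratedDeriv n Φ z| ≤ B := by
  induction n using Nat.twoStepInduction with
  | zero =>
    refine ⟨1, fun z hz ↦ ?_⟩
    rw [iteratedDeriv_zero, ← Real.sq_sqrt (zero_le_one.trans hz), hcos]
    exact Real.abs_cos_le_one _
  | one =>
    refine ⟨1, fun z hz ↦ ?_⟩
    have hsqrt : 1 ≤ √z := Real.one_le_sqrt.2 hz
    have hsin := Real.abs_sin_le_one √z
    rw [sin_eq_of_comp_sq_eq_cos (hΦ.differentiable (by simp)) hcos,
      Real.sq_sqrt (zero_le_one.trans hz), abs_neg, abs_mul, abs_of_nonneg (by positivity)] at hsin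
    rw [iteratedDeriv_one]
    nlinarith [abs_nonneg (deriv Φ z)]
  | more n ih ih' =>
    obtain ⟨B, hB⟩ := ih
    obtain ⟨B', hB'⟩ := ih'
    refine ⟨(4 * n + 2) * B' + B, fun z hz ↦ ?_⟩
    calc |iteratedDeriv (n + 2) Φ z| ≤ 4 * z * |iteratedDeriv (n + 2) Φ z| :=
          le_mul_of_one_le_left (abs_nonneg _) (by linarith)
      _ = |4 * z * iteratedDeriv (n + 2) Φ z| := by
          rw [abs_mul, abs_of_nonneg (by linarith : 0 ≤ 4 * z)]
      _ = |(4 * n + 2) * iteratedDeriv (n + 1) Φ z + iteratedDeriv n Φ z| := by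
          rw [iteratedDeriv_recurrence_of_comp_sq_eq_cos hΦ hcos n (by linarith), abs_neg]
      _ ≤ (4 * n + 2) * |iteratedDeriv (n + 1) Φ z| + |iteratedDeriv n Φ z| := by
          refine (abs_add_le _ _).trans_eq ?_
          rw [abs_mul, abs_of_nonneg (by positivity : 0 ≤ 4 * (n : ℝ) + 2)]
      _ ≤ (4 * n + 2) * B' + B := by
          gcongr
          exacts [hB' z hz, hB z hz]

end

lemma hasTemperateGrowth_of_bounded_iteratedDeriv {F : Type*} [NormedAddCommGroup F]
    [NormedSpace ℝ F] {f : ℝ → F} (hf : ContDiff ℝ ∞ f)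
    (hbound : ∀ n, ∃ B, ∀ x, ‖iteratedDeriv n f x‖ ≤ B) : f.HasTemperateGrowth := by
  refine ⟨hf, fun n ↦ ?_⟩
  obtain ⟨B, hB⟩ := hbound n
  exact ⟨0, B, fun x ↦ by simpa [norm_iteratedFDeriv_eq_norm_iteratedDeriv] using hB x⟩

lemma hasTemperateGrowth_cos : Real.cos.HasTemperateGrowth :=
  hasTemperateGrowth_of_bounded_iteratedDeriv Real.contDiff_cos
    fun n ↦ ⟨1, Real.abs_iteratedDeriv_cos_le_one n⟩

lemma hasTemperateGrowth_sin : Real.sin.HasTemperateGrowth :=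
  hasTemperateGrowth_of_bounded_iteratedDeriv Real.contDiff_sin
    fun n ↦ ⟨1, Real.abs_iteratedDeriv_sin_le_one n⟩

theorem exists_hasTemperateGrowth_comp_sq_eq_cos :
    ∃ Φ : ℝ → ℝ, Φ.HasTemperateGrowth ∧ ∀ v, Φ (v ^ 2) = Real.cos v := by
  obtain ⟨C, hC, hCcos⟩ := exists_contDiff_comp_sq_eq_cos
  let Φ : ℝ → ℝ := fun z ↦ Real.smoothTransition (z + 1) * C z
  have hΦ : ContDiff ℝ ∞ Φ :=
    (Real.smoothTransition.contDiff.comp (contDiff_id.add contDiff_const)).mul hC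
  have hcos : ∀ v, Φ (v ^ 2) = Real.cos v := fun v ↦ by
    simp only [Φ]
    rw [Real.smoothTransition.one_of_one_le (by linarith [sq_nonneg v]), one_mul, hCcos]
  refine ⟨Φ, hasTemperateGrowth_of_bounded_iteratedDeriv hΦ fun n ↦ ?_, hcos⟩
  obtain ⟨B, hB⟩ := exists_bound_iteratedDeriv_of_comp_sq_eq_cos hΦ hcos n
  obtain ⟨B', hB'⟩ := (isCompact_Icc (a := (-1 : ℝ)) (b := 1)).exists_bound_of_continuousOn
    (hΦ.continuous_iteratedDeriv n (by exact_mod_cast le_top)).continuousOn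
  refine ⟨max (max B B') 0, fun z ↦ ?_⟩
  rcases lt_or_ge z (-1) with hz | hz
  · have hzero : Φ =ᶠ[𝓝 z] fun _ ↦ 0 := by
      filter_upwards [gt_mem_nhds hz] with y hy
      simp only [Φ]
      rw [Real.smoothTransition.zero_of_nonpos (by linarith), zero_mul]
    simp [hzero.iteratedDeriv_eq n]
  rcases le_total z 1 with hz' | hz'
  · exact (hB' z ⟨hz, hz'⟩).trans ((le_max_right _ _).trans (le_max_left _ _))
  · exact (hB z hz').trans ((le_max_left _ _).trans (le_max_left _ _))

end CosSqrt

section FoldDivision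

open scoped FourierTransform
open SchwartzMap

lemma hasTemperateGrowth_deriv {F : Type*} [NormedAddCommGroup F] [NormedSpace ℝ F] {f : ℝ → F}
    (hf : f.HasTemperateGrowth) : (deriv f).HasTemperateGrowth :=
  (ContinuousLinearMap.apply ℝ F (1 : ℝ)).hasTemperateGrowth.comp (hasTemperateGrowth_fderiv hf)

lemma hasTemperateGrowth_cexp_mul_I :
    Function.HasTemperateGrowth fun a : ℝ ↦ Complex.exp (a * Complex.I) := by
  have hcos := Complex.ofRealCLM.hasTemperateGrowth.comp hasTemperateGrowth_cos
  have hsin := (Complex.ofRealCLM.hasTemperateGrowth.comp hasTemperateGrowth_sin).mul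
    (Function.HasTemperateGrowth.const Complex.I)
  have hexp : (fun a : ℝ ↦ Complex.exp (a * Complex.I)) =
      Complex.ofRealCLM ∘ Real.cos + (Complex.ofRealCLM ∘ Real.sin) * fun _ ↦ Complex.I := by
    funext a
    simp [Complex.exp_mul_I]
  exact hexp ▸ hcos.add hsin

variable {V : Type} [NormedAddCommGroup V] [InnerProductSpace ℝ V]

/-- The inverse Fourier kernel `exp (2πi⟨w, x⟩)` times `Θ (a² y)`, where `a = 2π⟨w, e⟩` is the
frequency of `w` in the direction `e`, as a function of `((x, y), w)`. -/
def foldKernel (e : V) (Θ : ℝ → ℝ) (q : (V × ℝ) × V) : ℂ :=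
  Complex.exp (↑(2 * Real.pi * inner ℝ q.2 q.1.1) * Complex.I) *
    Θ ((2 * Real.pi * inner ℝ q.2 e) ^ 2 * q.1.2)

lemma hasTemperateGrowth_foldKernel (e : V) {Θ : ℝ → ℝ} (hΘ : Θ.HasTemperateGrowth) :
    (foldKernel e Θ).HasTemperateGrowth := by
  have hphase : Function.HasTemperateGrowth fun q : (V × ℝ) × V ↦
      2 * Real.pi * inner ℝ q.2 q.1.1 :=
    (Function.HasTemperateGrowth.const (2 * Real.pi)).mul
      ((innerSL ℝ).bilinear_hasTemperateGrowth
        (ContinuousLinearMap.snd ℝ (V × ℝ) V).hasTemperateGrowth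
        (ContinuousLinearMap.fst ℝ V ℝ ∘L .fst ℝ (V × ℝ) V).hasTemperateGrowth)
  have harg : Function.HasTemperateGrowth fun q : (V × ℝ) × V ↦
      (2 * Real.pi * inner ℝ q.2 e) ^ 2 * q.1.2 :=
    (((Function.HasTemperateGrowth.const (2 * Real.pi)).mul
      ((Function.hasTemperateGrowth_inner_left e).comp
        (ContinuousLinearMap.snd ℝ (V × ℝ) V).hasTemperateGrowth)).pow 2).mul
      (ContinuousLinearMap.snd ℝ V ℝ ∘L .fst ℝ (V × ℝ) V).hasTemperateGrowth
  exact (hasTemperateGrowth_cexp_mul_I.comp hphase).mul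
    ((Complex.ofRealCLM.hasTemperateGrowth.comp hΘ).comp harg)

variable [FiniteDimensional ℝ V] [MeasurableSpace V] [BorelSpace V]

lemma schwartz_apply_eq_integral_fourier (f : 𝓢(V, ℂ)) (x : V) :
    f x = ∫ w, 𝓕 f w • Complex.exp (↑(2 * Real.pi * inner ℝ w x) * Complex.I) := by
  conv_lhs => rw [← FourierTransform.fourierInv_fourier_eq (F := 𝓢(V, ℂ)) f,
    SchwartzMap.fourierInv_coe, Real.fourierInv_eq']
  simp_rw [smul_eq_mul, mul_comm]

/- Fourier inversion reduces the claim to the kernel `exp (i v a) = cos (v a) + i sin (v a)`, where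
`cos (v a) = Φ (a² v²)` and `sin (v a) = -2 v a Φ' (a² v²)`. -/
theorem exists_contDiff_schwartz_fold_division (f : 𝓢(V, ℂ)) (e : V) :
    ∃ P Q : V × ℝ → ℂ, ContDiff ℝ ∞ P ∧ ContDiff ℝ ∞ Q ∧
      ∀ x (v : ℝ), f (x + v • e) = P (x, v ^ 2) + v • Q (x, v ^ 2) := by
  obtain ⟨Φ, hΦ, hcos⟩ := exists_hasTemperateGrowth_comp_sq_eq_cos
  let a : V → ℝ := fun w ↦ 2 * Real.pi * inner ℝ w e
  let m : V → ℂ := fun w ↦ -2 * a w * Complex.I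
  have ha : a.HasTemperateGrowth :=
    (Function.HasTemperateGrowth.const _).mul (Function.hasTemperateGrowth_inner_left e)
  have hm : m.HasTemperateGrowth := ((Function.HasTemperateGrowth.const _).mul
    (Complex.ofRealCLM.hasTemperateGrowth.comp ha)).mul (Function.HasTemperateGrowth.const _)
  have hP := hasTemperateGrowth_foldKernel e hΦ
  have hQ := hasTemperateGrowth_foldKernel e (hasTemperateGrowth_deriv hΦ)
  refine ⟨_, _, contDiff_integral_schwartz_smul (μ := volume) (𝓕 f) hP,
    contDiff_integral_schwartz_smul (μ := volume) (smulLeftCLM ℂ m (𝓕 f)) hQ, fun x v ↦ ?_⟩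
  have hintP := integrable_schwartz_smul (μ := volume) (𝓕 f) hP (x, v ^ 2)
  have hintQ := integrable_schwartz_smul (μ := volume) (smulLeftCLM ℂ m (𝓕 f)) hQ (x, v ^ 2)
  rw [schwartz_apply_eq_integral_fourier, ← integral_smul, ← integral_add hintP (hintQ.fun_smul v)]
  refine integral_congr_ae (Eventually.of_forall fun w ↦ ?_)
  have hsplit : Complex.exp (↑(2 * Real.pi * inner ℝ w (x + v • e)) * Complex.I) =
      Complex.exp (↑(2 * Real.pi * inner ℝ w x) * Complex.I) * (Φ (a w ^ 2 * v ^ 2) +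
        v * m w * deriv Φ (a w ^ 2 * v ^ 2)) := by
    have hexp : Complex.exp (↑(v * a w) * Complex.I) =
        Φ (a w ^ 2 * v ^ 2) + v * m w * deriv Φ (a w ^ 2 * v ^ 2) := by
      rw [Complex.exp_mul_I, ← Complex.ofReal_cos, ← Complex.ofReal_sin, ← hcos,
        sin_eq_of_comp_sq_eq_cos (hΦ.1.differentiable (by simp)) hcos, mul_pow, mul_comm (v ^ 2)]
      simp only [m]
      push_cast
      ring
    rw [← hexp, ← Complex.exp_add, ← add_mul, ← Complex.ofReal_add]
    simp only [a, inner_add_right, inner_smul_right]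
    ring_nf
  simp only [hsplit, smulLeftCLM_apply_apply hm, smul_eq_mul, Complex.real_smul, foldKernel, a]
  ring

theorem exists_contDiff_fold_division {g : ℝ × ℝ → ℝ} (hg : ContDiff ℝ ∞ g)
    (hgc : HasCompactSupport g) :
    ∃ P Q : ℝ × ℝ → ℝ, ContDiff ℝ ∞ P ∧ ContDiff ℝ ∞ Q ∧
      ∀ u v, g (u, v) = P (u, v ^ 2) + v * Q (u, v ^ 2) := by
  have hcomplex : ContDiff ℝ ∞ fun z ↦ (g (Complex.equivRealProdCLM z) : ℂ) :=
    Complex.ofRealCLM.contDiff.comp (hg.comp Complex.equivRealProdCLM.contDiff)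
  have hcompact : HasCompactSupport fun z ↦ (g (Complex.equivRealProdCLM z) : ℂ) :=
    (hgc.comp_homeomorph Complex.equivRealProdCLM.toHomeomorph).comp_left Complex.ofReal_zero
  obtain ⟨P, Q, hP, hQ, hPQ⟩ :=
    exists_contDiff_schwartz_fold_division (hcompact.toSchwartzMap hcomplex) Complex.I
  have hincl : ContDiff ℝ ∞ fun q : ℝ × ℝ ↦ ((q.1 : ℂ), q.2) :=
    (Complex.ofRealCLM.contDiff.comp contDiff_fst).prodMk contDiff_snd
  refine ⟨fun q ↦ (P (q.1, q.2)).re, fun q ↦ (Q (q.1, q.2)).re,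
    Complex.reCLM.contDiff.comp (hP.comp hincl), Complex.reCLM.contDiff.comp (hQ.comp hincl),
    fun u v ↦ ?_⟩
  simpa using congrArg Complex.re (hPQ u v)

lemma exists_contDiff_fold_division_of_smoothNear {g : ℝ × ℝ → ℝ} {p : ℝ × ℝ}
    (hg : SmoothNear g p) :
    ∃ P Q : ℝ × ℝ → ℝ, ContDiff ℝ ∞ P ∧ ContDiff ℝ ∞ Q ∧
      ∀ᶠ q in 𝓝 p, g q = P (q.1, q.2 ^ 2) + q.2 * Q (q.1, q.2 ^ 2) := by
  obtain ⟨G, hG, hGc, hGg⟩ := hg.exists_contDiff_hasCompactSupport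
  obtain ⟨P, Q, hP, hQ, hPQ⟩ := exists_contDiff_fold_division hG hGc
  exact ⟨P, Q, hP, hQ, hGg.mono fun q hq ↦ hq ▸ hPQ q.1 q.2⟩

end FoldDivision

section CuspidalCrossCap

lemma isLocalDiffeomorphAt_pi {ι : Type*} [Fintype ι] {f : (ι → ℝ) → ι → ℝ} {p : ι → ℝ}
    {L : ι → (ι → ℝ) →L[ℝ] ℝ} (hf : ∀ i, SmoothNear (f · i) p)
    (hL : ∀ i, HasFDerivAt (f · i) (L i) p) (hker : ∀ x, (∀ i, L i x = 0) → x = 0) :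
    IsLocalDiffeomorphAt 𝓘(ℝ, ι → ℝ) 𝓘(ℝ, ι → ℝ) ∞ f p := by
  have hsmooth : SmoothNear f p :=
    (eventually_all.2 hf).mono fun x hx ↦ contDiffAt_pi.2 hx
  refine isLocalDiffeomorphAt_of_injective hsmooth (hasFDerivAt_pi.2 hL) ?_
  exact (injective_iff_map_eq_zero _).2 fun x hx ↦ hker x (congrFun hx)

lemma isLocalDiffeomorphAt_prodMk {f g : ℝ × ℝ → ℝ} {p : ℝ × ℝ} {L M : ℝ × ℝ →L[ℝ] ℝ}
    (hf : SmoothNear f p) (hg : SmoothNear g p) (hL : HasFDerivAt f L p) (hM : HasFDerivAt g M p)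
    (hker : ∀ x, L x = 0 → M x = 0 → x = 0) :
    IsLocalDiffeomorphAt 𝓘(ℝ, ℝ × ℝ) 𝓘(ℝ, ℝ × ℝ) ∞ (fun x ↦ (f x, g x)) p := by
  refine isLocalDiffeomorphAt_of_injective (hf.prodMk hg) (hL.prodMk hM) ?_
  exact (injective_iff_map_eq_zero _).2 fun x hx ↦
    hker x (congrArg Prod.fst hx) (congrArg Prod.snd hx)

section

variable {P R : ℝ × ℝ → ℝ} {q : ℝ × ℝ}

lemma eq_zero_of_fderiv_apply_prod_zero (hR : fderiv ℝ R q (1, 0) ≠ 0) {h : ℝ}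
    (hh : fderiv ℝ R q (h, 0) = 0) : h = 0 := by
  have hsmul : fderiv ℝ R q (h, 0) = h * fderiv ℝ R q (1, 0) := by
    rw [← smul_eq_mul, ← map_smul]
    simp
  exact (mul_eq_zero.1 (hsmul ▸ hh)).resolve_right hR

lemma isLocalDiffeomorphAt_fold {u : ℝ} (hR : SmoothNear R (u, 0))
    (hR' : fderiv ℝ R (u, 0) (1, 0) ≠ 0) :
    IsLocalDiffeomorphAt 𝓘(ℝ, ℝ × ℝ) 𝓘(ℝ, ℝ × ℝ) ∞ (fun q ↦ (R (q.1, q.2 ^ 2), q.2)) (u, 0) := by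
  let φ : ℝ × ℝ → ℝ × ℝ := fun q ↦ (q.1, q.2 ^ 2)
  have hφ : SmoothNear φ (u, 0) := .of_contDiff (by fun_prop)
  have hφu : φ (u, 0) = (u, 0) := by simp [φ]
  have hφ' : HasFDerivAt φ ((ContinuousLinearMap.fst ℝ ℝ ℝ).prod 0) (u, 0) := by
    have hsq := (hasFDerivAt_snd (𝕜 := ℝ) (p := (u, (0 : ℝ)))).pow 2
    exact hasFDerivAt_fst.prodMk (by simpa using hsq)
  have hRφ : SmoothNear (R ∘ φ) (u, 0) := SmoothNear.comp (hφu.symm ▸ hR) hφ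
  have hRφ' : HasFDerivAt (R ∘ φ)
      (fderiv ℝ R (u, 0) ∘L (ContinuousLinearMap.fst ℝ ℝ ℝ).prod 0) (u, 0) := by
    refine HasFDerivAt.comp _ ?_ hφ'
    rw [hφu]
    exact (hR.contDiffAt.differentiableAt (by simp)).hasFDerivAt
  exact isLocalDiffeomorphAt_prodMk hRφ (.of_contDiff contDiff_snd) hRφ' hasFDerivAt_snd
    fun x hx hx2 ↦ Prod.ext (eq_zero_of_fderiv_apply_prod_zero hR' hx) hx2

lemma isLocalDiffeomorphAt_triangular {p : Fin 3 → ℝ} (hP : SmoothNear P (p 0, p 1))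
    (hR : SmoothNear R (p 0, p 1)) (hR' : fderiv ℝ R (p 0, p 1) (1, 0) ≠ 0) :
    IsLocalDiffeomorphAt 𝓘(ℝ, Fin 3 → ℝ) 𝓘(ℝ, Fin 3 → ℝ) ∞
      (fun X ↦ ![R (X 0, X 1), X 1, X 2 - P (X 0, X 1)]) p := by
  let coord (i : Fin 3) : (Fin 3 → ℝ) →L[ℝ] ℝ := ContinuousLinearMap.proj i
  let π : (Fin 3 → ℝ) →L[ℝ] ℝ × ℝ := (coord 0).prod (coord 1)
  have hπ : SmoothNear π p := .of_contDiff π.contDiff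
  have hRπ : SmoothNear (R ∘ π) p := SmoothNear.comp hR hπ
  have hPd : HasFDerivAt (P ∘ π) (fderiv ℝ P (p 0, p 1) ∘L π) p :=
    (hP.contDiffAt.differentiableAt (by simp)).hasFDerivAt.comp p π.hasFDerivAt
  have hRd : HasFDerivAt (R ∘ π) (fderiv ℝ R (p 0, p 1) ∘L π) p :=
    (hR.contDiffAt.differentiableAt (by simp)).hasFDerivAt.comp p π.hasFDerivAt
  have hsub : SmoothNear (fun X ↦ X 2 - P (π X)) p :=
    (SmoothNear.of_contDiff (coord 2).contDiff |>.and (SmoothNear.comp hP hπ)).mono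
      fun x hx ↦ hx.1.sub hx.2
  refine isLocalDiffeomorphAt_pi
    (L := ![fderiv ℝ R (p 0, p 1) ∘L π, coord 1, coord 2 - fderiv ℝ P (p 0, p 1) ∘L π]) ?_ ?_ ?_
  · intro i
    fin_cases i
    exacts [hRπ, .of_contDiff (coord 1).contDiff, hsub]
  · intro i
    fin_cases i
    exacts [hRd, (coord 1).hasFDerivAt, (coord 2).hasFDerivAt.sub hPd]
  · intro x hx
    have hx1 : x 1 = 0 := hx 1
    have hx0 : x 0 = 0 := eq_zero_of_fderiv_apply_prod_zero hR' (hx1 ▸ hx 0)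
    have hx2 : x 2 = 0 := by simpa [π, coord, hx0, hx1, Prod.mk_zero_zero] using hx 2
    ext i
    fin_cases i
    exacts [hx0, hx1, hx2]

end

/-- The cuspidal cross cap `(u, v) ↦ (u, v², u v³)`, the common normal form of the tangent surface
and of the folded umbrella. -/
def cuspidalCrossCap (p : ℝ × ℝ) : Fin 3 → ℝ :=
  ![p.1, p.2 ^ 2, p.1 * p.2 ^ 3]

theorem germEquiv_cuspidalCrossCap_of_eq_add {P R Z : ℝ × ℝ → ℝ} {u : ℝ}
    (hP : SmoothNear P (u, 0)) (hR : SmoothNear R (u, 0)) (hRu : R (u, 0) = 0)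
    (hR' : fderiv ℝ R (u, 0) (1, 0) ≠ 0)
    (hZ : ∀ᶠ q in 𝓝 (u, 0), Z q = P (q.1, q.2 ^ 2) + q.2 ^ 3 * R (q.1, q.2 ^ 2)) :
    GermEquiv (fun q ↦ ![q.1, q.2 ^ 2, Z q]) (u, 0) cuspidalCrossCap (0, 0) := by
  refine ⟨_, _, isLocalDiffeomorphAt_fold hR hR',
    isLocalDiffeomorphAt_triangular (P := P) (R := R) (by simpa) (by simpa) (by simpa),
    by simp [hRu], ?_⟩
  filter_upwards [hZ] with q hq
  simp [cuspidalCrossCap, hq, mul_comm]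

end CuspidalCrossCap

section FoldedGraph

variable {Z F : ℝ × ℝ → ℝ} {u : ℝ}

/- Along the segment `θ ↦ (u, θ v)` the derivative of `Z` is
`θ v² C₀ (u, θ² v²) + θ² v³ C₁ (u, θ² v²)`. -/
lemma eventually_eq_add_integral_of_hasDerivAt_fold {C₀ C₁ : ℝ × ℝ → ℝ} (hC₀ : Continuous C₀)
    (hC₁ : Continuous C₁)
    (hZ : ∀ᶠ q in 𝓝 (u, 0), HasDerivAt (fun v ↦ Z (q.1, v))
      (q.2 * (C₀ (q.1, q.2 ^ 2) + q.2 * C₁ (q.1, q.2 ^ 2))) q.2) :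
    ∀ᶠ q in 𝓝 (u, 0), Z q = Z (q.1, 0) +
      q.2 ^ 2 * (∫ θ in (0 : ℝ)..1, θ * C₀ (q.1, θ ^ 2 * q.2 ^ 2)) +
      q.2 ^ 3 * ∫ θ in (0 : ℝ)..1, θ ^ 2 * C₁ (q.1, θ ^ 2 * q.2 ^ 2) := by
  obtain ⟨r, hr, hball⟩ := Metric.eventually_nhds_iff_ball.1 hZ
  filter_upwards [Metric.ball_mem_nhds _ hr] with q hq
  rw [← ball_prod_same] at hq
  have hderiv : ∀ θ ∈ uIcc (0 : ℝ) 1, HasDerivAt (fun θ ↦ Z (q.1, θ * q.2))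
      (q.2 ^ 2 * (θ * C₀ (q.1, θ ^ 2 * q.2 ^ 2)) + q.2 ^ 3 * (θ ^ 2 * C₁ (q.1, θ ^ 2 * q.2 ^ 2)))
      θ := fun θ hθ ↦ by
    rw [uIcc_of_le zero_le_one] at hθ
    have hmem : θ * q.2 ∈ Metric.ball (0 : ℝ) r := by
      rw [mem_ball_zero_iff, norm_mul]
      exact (mul_le_of_le_one_left (norm_nonneg _) (by simpa [abs_le] using
        ⟨by linarith [hθ.1], hθ.2⟩)).trans_lt (mem_ball_zero_iff.1 hq.2)
    have hq' : (q.1, θ * q.2) ∈ Metric.ball (u, (0 : ℝ)) r :=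
      ball_prod_same u (0 : ℝ) r ▸ ⟨hq.1, hmem⟩
    refine ((hball _ hq').comp θ ((hasDerivAt_id θ).mul_const q.2)).congr_deriv ?_
    simp only [mul_pow]
    ring
  have hint : ∀ {C : ℝ × ℝ → ℝ} {a : ℝ} {n : ℕ}, Continuous C → IntervalIntegrable
      (fun θ ↦ a * (θ ^ n * C (q.1, θ ^ 2 * q.2 ^ 2))) volume 0 1 := fun hC ↦
    Continuous.intervalIntegrable (by fun_prop) _ _
  have hint₀ := hint (a := q.2 ^ 2) (n := 1) hC₀
  have hint₁ := hint (a := q.2 ^ 3) (n := 2) hC₁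
  simp only [pow_one] at hint₀
  have hFTC := intervalIntegral.integral_eq_sub_of_hasDerivAt hderiv (hint₀.add hint₁)
  rw [intervalIntegral.integral_add hint₀ hint₁, intervalIntegral.integral_const_mul,
    intervalIntegral.integral_const_mul] at hFTC
  simp only [one_mul, zero_mul] at hFTC
  linear_combination -hFTC

lemma eventually_fderiv_eq_of_fold {C₀ C₁ : ℝ × ℝ → ℝ} (hC₀ : Differentiable ℝ C₀)
    (hC₁ : Differentiable ℝ C₁)
    (hF : ∀ᶠ q in 𝓝 (u, 0), F q = C₀ (q.1, q.2 ^ 2) + q.2 * C₁ (q.1, q.2 ^ 2)) :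
    ∀ᶠ x in 𝓝 u, fderiv ℝ F (x, 0) (0, 1) = C₁ (x, 0) := by
  have hx : Tendsto (fun x : ℝ ↦ (x, (0 : ℝ))) (𝓝 u) (𝓝 (u, 0)) :=
    (Continuous.prodMk_left (0 : ℝ)).continuousAt
  filter_upwards [hx.eventually hF.eventually_nhds] with x hx
  have hfold : HasDerivAt (fun v : ℝ ↦ (x, v ^ 2)) 0 0 := by
    simpa [Prod.mk_zero_zero] using (hasDerivAt_const 0 x).prodMk (hasDerivAt_pow 2 (0 : ℝ))
  have hC₀x := (hC₀ (x, 0 ^ 2)).hasFDerivAt.comp_hasDerivAt 0 hfold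
  have hC₁x := (hC₁ (x, 0 ^ 2)).hasFDerivAt.comp_hasDerivAt 0 hfold
  have hsum : HasDerivAt (fun v : ℝ ↦ C₀ (x, v ^ 2) + v * C₁ (x, v ^ 2)) (C₁ (x, 0)) 0 := by
    exact (hC₀x.add ((hasDerivAt_id (0 : ℝ)).mul hC₁x)).congr_deriv (by simp)
  have hslice : HasDerivAt (fun v : ℝ ↦ (x, v)) (0, 1) 0 :=
    (hasDerivAt_const _ _).prodMk (hasDerivAt_id _)
  have hFd : DifferentiableAt ℝ F (x, 0) := by
    refine DifferentiableAt.congr_of_eventuallyEq ?_ hx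
    fun_prop
  refine (hFd.hasFDerivAt.comp_hasDerivAt 0 hslice).unique (hsum.congr_of_eventuallyEq ?_)
  filter_upwards [hslice.continuousAt.eventually hx] with v hv using hv

theorem germEquiv_cuspidalCrossCap_of_hasDerivAt {b : ℝ} (hZ : SmoothNear Z (u, 0))
    (hF : SmoothNear F (u, 0))
    (hZF : ∀ᶠ q in 𝓝 (u, 0), HasDerivAt (fun v ↦ Z (q.1, v)) (q.2 * F q) q.2)
    (hFu : fderiv ℝ F (u, 0) (0, 1) = 0)
    (hb : HasDerivAt (fun x ↦ fderiv ℝ F (x, 0) (0, 1)) b u) (hb₀ : b ≠ 0) :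
    GermEquiv (fun q ↦ ![q.1, q.2 ^ 2, Z q]) (u, 0) cuspidalCrossCap (0, 0) := by
  obtain ⟨C₀, C₁, hC₀, hC₁, hFC⟩ := exists_contDiff_fold_division_of_smoothNear hF
  have hC₁u := eventually_fderiv_eq_of_fold (hC₀.differentiable (by simp))
    (hC₁.differentiable (by simp)) hFC
  let M : ℝ × ℝ → ℝ := fun q ↦ ∫ θ in (0 : ℝ)..1, θ * C₀ (q.1, θ ^ 2 * q.2)
  let R : ℝ × ℝ → ℝ := fun q ↦ ∫ θ in (0 : ℝ)..1, θ ^ 2 * C₁ (q.1, θ ^ 2 * q.2)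
  have hM : ContDiff ℝ ∞ M := contDiff_intervalIntegral_unit (by fun_prop)
  have hR : ContDiff ℝ ∞ R := contDiff_intervalIntegral_unit (by fun_prop)
  have hR₀ : (fun x ↦ R (x, 0)) =ᶠ[𝓝 u] fun x ↦ 3⁻¹ * fderiv ℝ F (x, 0) (0, 1) := by
    filter_upwards [hC₁u] with x hx
    norm_num [R, hx, integral_pow]
  have hR' : fderiv ℝ R (u, 0) (1, 0) = 3⁻¹ * b := by
    have hslice : HasDerivAt (fun x : ℝ ↦ (x, (0 : ℝ))) (1, 0) u :=
      (hasDerivAt_id _).prodMk (hasDerivAt_const _ _)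
    exact ((hR.differentiable (by simp) _).hasFDerivAt.comp_hasDerivAt u hslice).unique
      ((hb.const_mul 3⁻¹).congr_of_eventuallyEq hR₀)
  refine germEquiv_cuspidalCrossCap_of_eq_add (P := fun q ↦ Z (q.1, 0) + q.2 * M q) (R := R)
    ?_ (.of_contDiff hR) (by simpa [hFu] using hR₀.eq_of_nhds) (by simp [hR', hb₀]) ?_
  · have hproj : SmoothNear (fun q : ℝ × ℝ ↦ (q.1, (0 : ℝ))) (u, 0) := .of_contDiff (by fun_prop)
    filter_upwards [SmoothNear.comp (g := Z) hZ hproj] with q hq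
    exact hq.add (contDiff_snd.mul hM).contDiffAt
  · refine eventually_eq_add_integral_of_hasDerivAt_fold hC₀.continuous hC₁.continuous ?_
    filter_upwards [hZF, hFC] with q hq hqF using hqF ▸ hq

end FoldedGraph

section FoldCoordinates

lemma contDiff_deriv {E : Type*} [NormedAddCommGroup E] [NormedSpace ℝ E] {f : ℝ → E}
    (hf : ContDiff ℝ ∞ f) : ContDiff ℝ ∞ (deriv f) :=
  (contDiff_infty_iff_deriv.1 hf).2

lemma hasDerivAt_of_contDiff {E : Type*} [NormedAddCommGroup E] [NormedSpace ℝ E] {f : ℝ → E}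
    (hf : ContDiff ℝ ∞ f) (t : ℝ) : HasDerivAt f (deriv f t) t :=
  (hf.differentiable (by simp) t).hasDerivAt

lemma hasFDerivAt_comp_fst {E : Type*} [NormedAddCommGroup E] [NormedSpace ℝ E] {f : ℝ → E}
    (hf : ContDiff ℝ ∞ f) (q : ℝ × ℝ) : HasFDerivAt (fun q : ℝ × ℝ ↦ f q.1)
      ((ContinuousLinearMap.fst ℝ ℝ ℝ).smulRight (deriv f q.1)) q :=
  ((hasDerivAt_of_contDiff hf q.1).hasFDerivAt.comp q hasFDerivAt_fst).congr_fderiv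
    (by ext <;> simp)

variable {a x y : ℝ → ℝ} {t : ℝ}

lemma taylor_remainder_eq_sq_mul_integral (ha : ContDiff ℝ ∞ a) (t s : ℝ) :
    a (t + s) - a t - s * deriv a t =
      s ^ 2 * ∫ θ in (0 : ℝ)..1, (1 - θ) * deriv (deriv a) (t + θ * s) := by
  have ha'' := (contDiff_deriv (contDiff_deriv ha)).continuous
  have hprim : ∀ θ ∈ uIcc (0 : ℝ) 1,
      HasDerivAt (fun θ ↦ a (t + θ * s) + (1 - θ) * (s * deriv a (t + θ * s)))
        (s ^ 2 * ((1 - θ) * deriv (deriv a) (t + θ * s))) θ := fun θ _ ↦ by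
    have hline : HasDerivAt (fun θ ↦ t + θ * s) s θ := by
      simpa using ((hasDerivAt_id θ).mul_const s).const_add t
    have hweight : HasDerivAt (fun θ ↦ 1 - θ) (-1) θ := by
      simpa using (hasDerivAt_id θ).const_sub 1
    have hd := (hasDerivAt_of_contDiff ha _).comp θ hline
    have hd' := (hasDerivAt_of_contDiff (contDiff_deriv ha) _).comp θ hline
    exact (hd.add (hweight.mul (hd'.const_mul s))).congr_deriv (by simp only [Function.comp]; ring)
  have hFTC := intervalIntegral.integral_eq_sub_of_hasDerivAt hprim
    (Continuous.intervalIntegrable (by fun_prop) _ _)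
  rw [intervalIntegral.integral_const_mul] at hFTC
  simp only [one_mul, zero_mul, add_zero, sub_self, sub_zero] at hFTC
  linear_combination -hFTC

lemma exists_smoothNear_sq_eq_taylor_remainder (ha : ContDiff ℝ ∞ a)
    (ht : 0 < deriv (deriv a) t) :
    ∃ (V : ℝ × ℝ → ℝ) (c : ℝ), SmoothNear V (t, 0) ∧ V (t, 0) = 0 ∧ c ≠ 0 ∧
      HasFDerivAt V (c • ContinuousLinearMap.snd ℝ ℝ ℝ) (t, 0) ∧
      ∀ᶠ q in 𝓝 (t, 0), V q ^ 2 = a (q.1 + q.2) - a q.1 - q.2 * deriv a q.1 := by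
  have := contDiff_deriv (contDiff_deriv ha)
  let h : ℝ × ℝ → ℝ := fun q ↦ ∫ θ in (0 : ℝ)..1, (1 - θ) * deriv (deriv a) (q.1 + θ * q.2)
  have hh : ContDiff ℝ ∞ h := contDiff_intervalIntegral_unit (by fun_prop)
  have hht : 0 < h (t, 0) := by
    have hweight : ∫ θ in (0 : ℝ)..1, (1 - θ) = 1 / 2 := by
      rw [intervalIntegral.integral_sub (by simp) (by simp)]
      norm_num
    have ht0 : h (t, 0) = 1 / 2 * deriv (deriv a) t := by
      simp only [h, mul_zero, add_zero, intervalIntegral.integral_mul_const, hweight]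
    linarith
  have hpos : ∀ᶠ q in 𝓝 (t, 0), 0 < h q := hh.continuous.continuousAt.eventually (lt_mem_nhds hht)
  have hsqrt : SmoothNear (fun q ↦ √(h q)) (t, 0) :=
    hpos.mono fun q hq ↦ hh.contDiffAt.sqrt hq.ne'
  refine ⟨fun q ↦ q.2 * √(h q), √(h (t, 0)), hsqrt.mono fun q hq ↦ contDiffAt_snd.mul hq, by simp,
    (Real.sqrt_pos.2 hht).ne', ?_, hpos.mono fun q hq ↦ ?_⟩
  · have hd := (hsqrt.contDiffAt.differentiableAt (by simp)).hasFDerivAt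
    exact (hasFDerivAt_snd.mul hd).congr_fderiv (by simp)
  · rw [taylor_remainder_eq_sq_mul_integral ha, mul_pow, Real.sq_sqrt hq.le]

lemma exists_contDiff_comp_eventuallyEq (hx : ContDiff ℝ ∞ x) (hy : ContDiff ℝ ∞ y)
    (hxt : deriv x t ≠ 0) : ∃ a : ℝ → ℝ, ContDiff ℝ ∞ a ∧ ∀ᶠ r in 𝓝 t, a (x r) = y r := by
  have hxd : IsLocalDiffeomorphAt 𝓘(ℝ, ℝ) 𝓘(ℝ, ℝ) ∞ x t :=
    isLocalDiffeomorphAt_of_injective (.of_contDiff hx) (hasDerivAt_of_contDiff hx t).hasFDerivAt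
      ((injective_iff_map_eq_zero _).2 fun h hh ↦ by simpa [hxt] using hh)
  obtain ⟨a, ha, -, hay⟩ := SmoothNear.exists_contDiff_hasCompactSupport
    (SmoothNear.comp (.of_contDiff hy) (smoothNear_localInverse hxd))
  refine ⟨a, ha, ?_⟩
  filter_upwards [hx.continuous.continuousAt.eventually hay,
    hxd.localInverse_eventuallyEq_left] with r hr hinv
  rw [hr, Function.comp_apply, show hxd.localInverse (x r) = r from hinv]

/-- The tangent surface `(t, s) ↦ γ t + s γ' t` of a curve `γ`. -/
def tangentSurface {E : Type*} [NormedAddCommGroup E] [NormedSpace ℝ E] (γ : ℝ → E)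
    (p : ℝ × ℝ) : E :=
  γ p.1 + p.2 • deriv γ p.1

lemma hasFDerivAt_prodMk_mul_deriv (hx : ContDiff ℝ ∞ x) :
    HasFDerivAt (fun q : ℝ × ℝ ↦ (x q.1, q.2 * deriv x q.1))
      (deriv x t • ContinuousLinearMap.id ℝ (ℝ × ℝ)) (t, 0) :=
  ((hasFDerivAt_comp_fst hx _).prodMk
    (hasFDerivAt_snd.mul (hasFDerivAt_comp_fst (contDiff_deriv hx) _))).congr_fderiv
    (by ext <;> simp)

-- A tangent line of the graph of `a` falls short of the graph by the Taylor remainder of `a`.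
theorem exists_tangentSurface_eq_sub_sq (hx : ContDiff ℝ ∞ x) (hy : ContDiff ℝ ∞ y)
    (hxt : deriv x t ≠ 0) (hyt : deriv y t = 0) (hyt' : 0 < deriv (deriv y) t) :
    ∃ (a : ℝ → ℝ) (V : ℝ × ℝ → ℝ) (c : ℝ), ContDiff ℝ ∞ a ∧ SmoothNear V (t, 0) ∧
      V (t, 0) = 0 ∧ c ≠ 0 ∧ HasFDerivAt V (c • ContinuousLinearMap.snd ℝ ℝ ℝ) (t, 0) ∧
      ∀ᶠ q in 𝓝 (t, 0), tangentSurface y q = a (tangentSurface x q) - V q ^ 2 := by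
  obtain ⟨a, ha, hay⟩ := exists_contDiff_comp_eventuallyEq hx hy hxt
  have hay' : ∀ᶠ r in 𝓝 t, deriv y r = deriv a (x r) * deriv x r := by
    filter_upwards [hay.eventually_nhds] with r hr
    exact (((hasDerivAt_of_contDiff ha (x r)).comp r
      (hasDerivAt_of_contDiff hx r)).congr_of_eventuallyEq (hr.mono fun _ h ↦ h.symm)).deriv
  have hat : deriv a (x t) = 0 := by simpa [hyt, hxt] using hay'.self_of_nhds
  have hat' : 0 < deriv (deriv a) (x t) := by
    have hprod := ((hasDerivAt_of_contDiff (contDiff_deriv ha) (x t)).comp t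
      (hasDerivAt_of_contDiff hx t)).mul (hasDerivAt_of_contDiff (contDiff_deriv hx) t)
    have hyt'' : deriv (deriv y) t = deriv (deriv a) (x t) * deriv x t ^ 2 := by
      rw [(hprod.congr_of_eventuallyEq hay').deriv]
      simp only [Function.comp, hat]
      ring
    exact (pos_iff_pos_of_mul_pos (hyt'' ▸ hyt')).2 (by positivity)
  obtain ⟨V, c, hV, hV₀, hc, hVd, hVsq⟩ := exists_smoothNear_sq_eq_taylor_remainder ha hat'
  let φ : ℝ × ℝ → ℝ × ℝ := fun q ↦ (x q.1, q.2 * deriv x q.1)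
  have hφ : ContDiff ℝ ∞ φ := by
    have := contDiff_deriv hx
    fun_prop
  have hφt : φ (t, 0) = (x t, 0) := by simp [φ]
  rw [← hφt] at hV hVd
  refine ⟨a, V ∘ φ, deriv x t * c, ha, hV.comp (.of_contDiff hφ), by simp [hφt, hV₀],
    mul_ne_zero hxt hc, ?_, ?_⟩
  · exact (hVd.comp (t, (0 : ℝ)) (hasFDerivAt_prodMk_mul_deriv hx)).congr_fderiv (by ext <;> simp)
  · filter_upwards [(hφt ▸ hφ.continuous.continuousAt : Tendsto φ _ (𝓝 (x t, 0))).eventually hVsq,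
      continuous_fst.continuousAt.eventually hay, continuous_fst.continuousAt.eventually hay']
      with q hq hqy hqy'
    simp only [tangentSurface, Function.comp, hq, ← hqy, hqy', φ, smul_eq_mul]
    ring

end FoldCoordinates

lemma germEquiv_of_eq_sub_sq {f g h : ℝ × ℝ → ℝ} {a : ℝ → ℝ} {κ : ℝ × ℝ → ℝ × ℝ} {p : ℝ × ℝ}
    (hκ : IsLocalDiffeomorphAt 𝓘(ℝ, ℝ × ℝ) 𝓘(ℝ, ℝ × ℝ) ∞ κ p) (ha : ContDiff ℝ ∞ a)
    (hf : ∀ᶠ q in 𝓝 p, f q = (κ q).1) (hg : ∀ᶠ q in 𝓝 p, g q = a (f q) - (κ q).2 ^ 2) :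
    GermEquiv (fun q ↦ ![f q, g q, h q]) p
      (fun q ↦ ![q.1, q.2 ^ 2, h (hκ.localInverse q)]) (κ p) := by
  let τ : (Fin 3 → ℝ) → Fin 3 → ℝ := fun X ↦ ![X 0, a (X 0) - X 1, X 2]
  have hτ : ContDiff ℝ ∞ τ := contDiff_pi.2 fun i ↦ by
    fin_cases i <;> dsimp [τ] <;> fun_prop
  have hinv : Function.Involutive τ := fun X ↦ by
    ext i
    fin_cases i <;> simp [τ]
  have hτdiffeo := isLocalDiffeomorphAt_of_inverse hτ hτ hinv hinv
  refine ⟨κ, τ, hκ, hτdiffeo _, rfl, ?_⟩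
  filter_upwards [hf, hg, hκ.localInverse_eventuallyEq_left] with q hfq hgq hq
  simp [τ, hgq, hfq, show hκ.localInverse (κ q) = q from hq]

lemma hasFDerivAt_tangentSurface {E : Type*} [NormedAddCommGroup E] [NormedSpace ℝ E]
    {γ : ℝ → E} (hγ : ContDiff ℝ ∞ γ) (q : ℝ × ℝ) :
    HasFDerivAt (tangentSurface γ)
      ((ContinuousLinearMap.fst ℝ ℝ ℝ + ContinuousLinearMap.snd ℝ ℝ ℝ).smulRight (deriv γ q.1) +
        q.2 • (ContinuousLinearMap.fst ℝ ℝ ℝ).smulRight (deriv (deriv γ) q.1)) q :=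
  ((hasFDerivAt_comp_fst hγ q).add
    (hasFDerivAt_snd.smul (hasFDerivAt_comp_fst (contDiff_deriv hγ) q))).congr_fderiv
    (by ext <;> simp)

lemma contDiff_tangentSurface {E : Type*} [NormedAddCommGroup E] [NormedSpace ℝ E] {γ : ℝ → E}
    (hγ : ContDiff ℝ ∞ γ) : ContDiff ℝ ∞ (tangentSurface γ) := by
  have := contDiff_deriv hγ
  unfold tangentSurface
  fun_prop

theorem exists_foldCoordinates {x y : ℝ → ℝ} {t : ℝ} (hx : ContDiff ℝ ∞ x) (hy : ContDiff ℝ ∞ y)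
    (hxt : deriv x t ≠ 0) (hyt : deriv y t = 0) (hyt' : 0 < deriv (deriv y) t) :
    ∃ (a : ℝ → ℝ) (κ : ℝ × ℝ → ℝ × ℝ) (b c : ℝ), ContDiff ℝ ∞ a ∧ b ≠ 0 ∧ c ≠ 0 ∧
      IsLocalDiffeomorphAt 𝓘(ℝ, ℝ × ℝ) 𝓘(ℝ, ℝ × ℝ) ∞ κ (t, 0) ∧
      HasFDerivAt κ ((b • (ContinuousLinearMap.fst ℝ ℝ ℝ + ContinuousLinearMap.snd ℝ ℝ ℝ)).prod
        (c • ContinuousLinearMap.snd ℝ ℝ ℝ)) (t, 0) ∧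
      κ (t, 0) = (x t, 0) ∧ (∀ q, tangentSurface x q = (κ q).1) ∧
      ∀ᶠ q in 𝓝 (t, 0), tangentSurface y q = a (tangentSurface x q) - (κ q).2 ^ 2 := by
  obtain ⟨a, V, c, ha, hV, hV₀, hc, hVd, hVy⟩ := exists_tangentSurface_eq_sub_sq hx hy hxt hyt hyt'
  have hxs : ContDiff ℝ ∞ (tangentSurface x) := contDiff_tangentSurface hx
  have hxd : HasFDerivAt (tangentSurface x)
      (deriv x t • (ContinuousLinearMap.fst ℝ ℝ ℝ + ContinuousLinearMap.snd ℝ ℝ ℝ)) (t, 0) :=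
    (hasFDerivAt_tangentSurface hx _).congr_fderiv (by ext <;> simp)
  refine ⟨a, fun q ↦ (tangentSurface x q, V q), deriv x t, c, ha, hxt, hc,
    isLocalDiffeomorphAt_prodMk (.of_contDiff hxs) hV hxd hVd fun q hq hq' ↦ ?_,
    hxd.prodMk hVd, by simp [tangentSurface, hV₀], fun _ ↦ rfl, hVy⟩
  have hq2 : q.2 = 0 := by simpa [hc] using hq'
  have hq1 : q.1 = 0 := by simpa [hxt, hq2] using hq
  exact Prod.ext hq1 hq2

lemma fderiv_localInverse_apply {E F : Type*} [NormedAddCommGroup E] [NormedSpace ℝ E]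
    [NormedAddCommGroup F] [NormedSpace ℝ F] {σ : E → F} {p : E} {L : E →L[ℝ] F}
    (hσ : IsLocalDiffeomorphAt 𝓘(ℝ, E) 𝓘(ℝ, F) ∞ σ p) (hL : HasFDerivAt σ L p) (v : F) :
    L (fderiv ℝ hσ.localInverse (σ p) v) = v := by
  have hinv := ((smoothNear_localInverse hσ).contDiffAt.differentiableAt (by simp)).hasFDerivAt
  have hid : HasFDerivAt (σ ∘ hσ.localInverse) (L ∘L fderiv ℝ hσ.localInverse (σ p)) (σ p) :=
    HasFDerivAt.comp _ (by rwa [hσ.localInverse_left_inv hσ.localInverse_mem_target]) hinv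
  exact DFunLike.congr_fun
    (hid.unique ((hasFDerivAt_id _).congr_of_eventuallyEq hσ.localInverse_eventuallyEq_right)) v

lemma hasDerivAt_div_of_eq_zero {f g : ℝ → ℝ} {f' t : ℝ} (hf : HasDerivAt f f' t)
    (hft : f t = 0) (hg : DifferentiableAt ℝ g t) (hgt : g t ≠ 0) :
    HasDerivAt (fun r ↦ f r / g r) (f' / g t) t :=
  (hf.div hg.hasDerivAt hgt).congr_deriv (by rw [hft]; field_simp; simp)

lemma hasDerivAt_deriv_div_of_eq_zero {f g : ℝ → ℝ} {t : ℝ} (hf : ContDiff ℝ ∞ f)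
    (hg : ContDiff ℝ ∞ g) (hft : f t = 0) (hft' : deriv f t = 0) (hgt : g t ≠ 0) :
    HasDerivAt (deriv fun r ↦ f r / g r) (deriv (deriv f) t / g t) t := by
  have hderiv : deriv (fun r ↦ f r / g r) =ᶠ[𝓝 t]
      fun r ↦ (deriv f r * g r - f r * deriv g r) / g r ^ 2 := by
    filter_upwards [hg.continuous.continuousAt.eventually_ne hgt] with r hr
    exact ((hasDerivAt_of_contDiff hf r).div (hasDerivAt_of_contDiff hg r) hr).deriv
  have hnum : HasDerivAt (fun r ↦ deriv f r * g r - f r * deriv g r)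
      (deriv (deriv f) t * g t) t := by
    have hf' := contDiff_deriv hf
    have hg' := contDiff_deriv hg
    refine (((hasDerivAt_of_contDiff hf' t).mul (hasDerivAt_of_contDiff hg t)).sub
      ((hasDerivAt_of_contDiff hf t).mul (hasDerivAt_of_contDiff hg' t))).congr_deriv ?_
    rw [hft, hft']
    ring
  refine HasDerivAt.congr_of_eventuallyEq ?_ hderiv
  refine (hasDerivAt_div_of_eq_zero (g := fun r ↦ g r ^ 2) hnum (by simp [hft, hft'])
    ((hg.differentiable (by simp) t).pow 2) (pow_ne_zero 2 hgt)).congr_deriv ?_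
  field_simp

section AdaptedCurve

variable {x y z C : ℝ → ℝ} {t : ℝ}

lemma hasDerivAt_fderiv_comp {T : ℝ × ℝ → ℝ} {u : ℝ} (hT : SmoothNear T (u, 0))
    (hC : SmoothNear C (T (u, 0))) (hC' : deriv C (T (u, 0)) = 0)
    {d : ℝ} (hC'' : HasDerivAt (deriv C) d (T (u, 0))) (v : ℝ × ℝ) :
    HasDerivAt (fun x ↦ fderiv ℝ (C ∘ T) (x, 0) v)
      (d * fderiv ℝ T (u, 0) (1, 0) * fderiv ℝ T (u, 0) v) u := by
  have hline : HasDerivAt (fun x : ℝ ↦ (x, (0 : ℝ))) (1, 0) u :=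
    (hasDerivAt_id u).prodMk (hasDerivAt_const u 0)
  have hchain : (fun x ↦ fderiv ℝ (C ∘ T) (x, 0) v) =ᶠ[𝓝 u]
      fun x ↦ deriv C (T (x, 0)) * fderiv ℝ T (x, 0) v := by
    have hlim : Tendsto (fun x : ℝ ↦ (x, (0 : ℝ))) (𝓝 u) (𝓝 (u, 0)) := hline.continuousAt
    filter_upwards [hlim.eventually hT, hlim.eventually (hT.continuousAt.eventually hC)]
      with x hTx hCx
    have hCx' := (hCx.differentiableAt (by simp)).hasDerivAt
    rw [(hCx'.comp_hasFDerivAt _ (hTx.differentiableAt (by simp)).hasFDerivAt).fderiv]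
    rfl
  have hCd : HasDerivAt (fun x ↦ deriv C (T (x, 0)))
      (d * fderiv ℝ T (u, 0) (1, 0)) u := by
    have hTd := (hT.contDiffAt.differentiableAt (by simp)).hasFDerivAt.comp_hasDerivAt u hline
    exact hC''.comp u hTd
  have hTd : DifferentiableAt ℝ (fun x ↦ fderiv ℝ T (x, 0) v) u := by
    have hT' := (hT.contDiffAt.fderiv_right (m := 1) (by norm_cast)).differentiableAt (by simp)
    exact (hT'.hasFDerivAt.comp_hasDerivAt u hline).differentiableAt.clm_apply (by fun_prop)
  refine (hCd.mul hTd.hasDerivAt).congr_of_eventuallyEq hchain |>.congr_deriv ?_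
  rw [hC']
  ring

lemma fderiv_tangentSurface_eq (hx : ContDiff ℝ ∞ x) (hy : ContDiff ℝ ∞ y)
    (hz : ContDiff ℝ ∞ z) {q : ℝ × ℝ} {m c : ℝ}
    (hzq : deriv z q.1 = m * deriv x q.1 + c * deriv y q.1)
    (hzq' : deriv (deriv z) q.1 = m * deriv (deriv x) q.1 + c * deriv (deriv y) q.1) :
    fderiv ℝ (tangentSurface z) q =
      m • fderiv ℝ (tangentSurface x) q + c • fderiv ℝ (tangentSurface y) q := by
  rw [(hasFDerivAt_tangentSurface hx q).fderiv, (hasFDerivAt_tangentSurface hy q).fderiv,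
    (hasFDerivAt_tangentSurface hz q).fderiv]
  refine ContinuousLinearMap.ext fun v ↦ ?_
  simp only [add_apply, smul_apply, ContinuousLinearMap.smulRight_apply,
    ContinuousLinearMap.coe_fst', ContinuousLinearMap.coe_snd', smul_eq_mul]
  linear_combination (v.1 + v.2) * hzq + q.2 * v.1 * hzq'

lemma deriv_wronskian {f g : ℝ → ℝ} (hf : ContDiff ℝ ∞ f) (hg : ContDiff ℝ ∞ g) :
    deriv (fun r ↦ deriv f r * g r - f r * deriv g r) =
      fun r ↦ deriv (deriv f) r * g r - f r * deriv (deriv g) r := by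
  ext r
  have hf' := hasDerivAt_of_contDiff (contDiff_deriv hf) r
  have hg' := hasDerivAt_of_contDiff (contDiff_deriv hg) r
  refine ((hf'.mul (hasDerivAt_of_contDiff hg r)).sub
    ((hasDerivAt_of_contDiff hf r).mul hg')).deriv.trans ?_
  ring

lemma deriv_deriv_wronskian_of_eq_zero {f g : ℝ → ℝ} (hf : ContDiff ℝ ∞ f)
    (hg : ContDiff ℝ ∞ g) (hft : f t = 0) (hft' : deriv f t = 0)
    (hft'' : deriv (deriv f) t = 0) :
    deriv (deriv fun r ↦ deriv f r * g r - f r * deriv g r) t =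
      deriv (deriv (deriv f)) t * g t := by
  have hf'' := hasDerivAt_of_contDiff (contDiff_deriv (contDiff_deriv hf)) t
  have hg'' := hasDerivAt_of_contDiff (contDiff_deriv (contDiff_deriv hg)) t
  rw [deriv_wronskian hf hg]
  refine ((hf''.mul (hasDerivAt_of_contDiff hg t)).sub
    ((hasDerivAt_of_contDiff hf t).mul hg'')).deriv.trans ?_
  rw [hft, hft', hft'']
  ring

-- By Cramer's rule, `C` is the ratio of the minors `z'' x' - z' x''` and `y'' x' - y' x''`.
lemma exists_smoothNear_deriv_eq_add (hx : ContDiff ℝ ∞ x) (hy : ContDiff ℝ ∞ y)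
    (hz : ContDiff ℝ ∞ z) (hxt : deriv x t ≠ 0) (hyt : deriv y t = 0)
    (hyt' : deriv (deriv y) t ≠ 0) (hzt : deriv z t = 0) (hzt' : deriv (deriv z) t = 0)
    (hzt'' : deriv (deriv (deriv z)) t = 0) (hzt''' : deriv (deriv (deriv (deriv z))) t ≠ 0) :
    ∃ (C : ℝ → ℝ) (d : ℝ), SmoothNear C t ∧ deriv C t = 0 ∧ HasDerivAt (deriv C) d t ∧ d ≠ 0 ∧
      ∀ᶠ r in 𝓝 t, ∃ m, deriv z r = m * deriv x r + C r * deriv y r ∧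
        deriv (deriv z) r = m * deriv (deriv x) r + C r * deriv (deriv y) r := by
  have hx' := contDiff_deriv hx
  have := contDiff_deriv hx'
  have hy' := contDiff_deriv hy
  have := contDiff_deriv hy'
  have hz' := contDiff_deriv hz
  have := contDiff_deriv hz'
  let N : ℝ → ℝ := fun r ↦ deriv (deriv z) r * deriv x r - deriv z r * deriv (deriv x) r
  let D : ℝ → ℝ := fun r ↦ deriv (deriv y) r * deriv x r - deriv y r * deriv (deriv x) r
  have hN : ContDiff ℝ ∞ N := by fun_prop
  have hD : ContDiff ℝ ∞ D := by fun_prop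
  have hNt : N t = 0 := by simp [N, hzt, hzt']
  have hDt : D t ≠ 0 := by simp [D, hyt, hyt', hxt]
  have hNt' : deriv N t = 0 := by simp [N, deriv_wronskian hz' hx', hzt, hzt'']
  have hNt'' : deriv (deriv N) t ≠ 0 :=
    deriv_deriv_wronskian_of_eq_zero hz' hx' hzt hzt' hzt'' ▸ mul_ne_zero hzt''' hxt
  have hDne := hD.continuous.continuousAt.eventually_ne hDt
  refine ⟨fun r ↦ N r / D r, _, hDne.mono fun r hr ↦ hN.contDiffAt.div hD.contDiffAt hr, ?_,
    hasDerivAt_deriv_div_of_eq_zero hN hD hNt hNt' hDt, div_ne_zero hNt'' hDt, ?_⟩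
  · rw [(hasDerivAt_div_of_eq_zero (hasDerivAt_of_contDiff hN t) hNt
      (hD.differentiable (by simp) t) hDt).deriv, hNt', zero_div]
  · filter_upwards [hDne, hx'.continuous.continuousAt.eventually_ne hxt] with r hDr hxr
    refine ⟨(deriv z r - N r / D r * deriv y r) / deriv x r, ?_, ?_⟩
    · field_simp
      ring
    · field_simp
      ring

lemma hasDerivAt_comp_of_fderiv_eq_add {f g h : ℝ × ℝ → ℝ} {ρ : ℝ × ℝ → ℝ × ℝ} {a : ℝ → ℝ}
    {q : ℝ × ℝ} {m c : ℝ} (hρ : DifferentiableAt ℝ ρ q) (hf : DifferentiableAt ℝ f (ρ q))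
    (hg : DifferentiableAt ℝ g (ρ q)) (hh : DifferentiableAt ℝ h (ρ q))
    (hfgh : fderiv ℝ h (ρ q) = m • fderiv ℝ f (ρ q) + c • fderiv ℝ g (ρ q))
    (hfρ : ∀ᶠ p in 𝓝 q, f (ρ p) = p.1) (hgρ : ∀ᶠ p in 𝓝 q, g (ρ p) = a p.1 - p.2 ^ 2) :
    HasDerivAt (fun v ↦ h (ρ (q.1, v))) (q.2 * (-2 * c)) q.2 := by
  have hline : HasDerivAt (fun v : ℝ ↦ (q.1, v)) (0, 1) q.2 :=
    (hasDerivAt_const q.2 q.1).prodMk (hasDerivAt_id q.2)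
  have hlim : Tendsto (fun v : ℝ ↦ (q.1, v)) (𝓝 q.2) (𝓝 q) := hline.continuousAt
  have hρline := hρ.hasFDerivAt.comp_hasDerivAt q.2 hline
  have hf₀ : fderiv ℝ f (ρ q) (fderiv ℝ ρ q (0, 1)) = 0 :=
    (hf.hasFDerivAt.comp_hasDerivAt q.2 hρline).unique
      ((hasDerivAt_const q.2 q.1).congr_of_eventuallyEq (hlim.eventually hfρ))
  have hg₀ : fderiv ℝ g (ρ q) (fderiv ℝ ρ q (0, 1)) = -(2 * q.2) :=
    (hg.hasFDerivAt.comp_hasDerivAt q.2 hρline).unique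
      ((((hasDerivAt_pow 2 q.2).const_sub (a q.1)).congr_of_eventuallyEq
        (hlim.eventually hgρ)).congr_deriv (by simp))
  refine (hh.hasFDerivAt.comp_hasDerivAt q.2 hρline).congr_deriv ?_
  simp only [hfgh, add_apply, smul_apply, hf₀, hg₀, smul_eq_mul]
  ring

lemma fderiv_fst_localInverse_ne_zero {κ : ℝ × ℝ → ℝ × ℝ} {p : ℝ × ℝ} {b c : ℝ} (hb : b ≠ 0)
    (hc : c ≠ 0) (hκ : IsLocalDiffeomorphAt 𝓘(ℝ, ℝ × ℝ) 𝓘(ℝ, ℝ × ℝ) ∞ κ p)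
    (hκd : HasFDerivAt κ ((b • (ContinuousLinearMap.fst ℝ ℝ ℝ + ContinuousLinearMap.snd ℝ ℝ ℝ)).prod
      (c • ContinuousLinearMap.snd ℝ ℝ ℝ)) p) :
    fderiv ℝ (fun q ↦ (hκ.localInverse q).1) (κ p) (1, 0) ≠ 0 ∧
      fderiv ℝ (fun q ↦ (hκ.localInverse q).1) (κ p) (0, 1) ≠ 0 := by
  have hfst : HasFDerivAt (fun q ↦ (hκ.localInverse q).1) _ (κ p) :=
    ((smoothNear_localInverse hκ).contDiffAt.differentiableAt (by simp)).hasFDerivAt.fst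
  rw [hfst.fderiv]
  constructor <;> intro hzero
  · obtain ⟨hsum, hsnd⟩ := Prod.ext_iff.1 (fderiv_localInverse_apply hκ hκd (1, 0))
    simp_all
  · obtain ⟨hsum, hsnd⟩ := Prod.ext_iff.1 (fderiv_localInverse_apply hκ hκd (0, 1))
    simp_all

theorem germEquiv_cuspidalCrossCap_of_hasDerivAt_comp {Z T : ℝ × ℝ → ℝ} {u d : ℝ}
    (hZ : SmoothNear Z (u, 0)) (hT : SmoothNear T (u, 0)) (hTu : fderiv ℝ T (u, 0) (1, 0) ≠ 0)
    (hTv : fderiv ℝ T (u, 0) (0, 1) ≠ 0) (hC : SmoothNear C (T (u, 0)))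
    (hC' : deriv C (T (u, 0)) = 0) (hC'' : HasDerivAt (deriv C) d (T (u, 0))) (hd : d ≠ 0)
    (hZC : ∀ᶠ q in 𝓝 (u, 0), HasDerivAt (fun v ↦ Z (q.1, v)) (q.2 * C (T q)) q.2) :
    GermEquiv (fun q ↦ ![q.1, q.2 ^ 2, Z q]) (u, 0) cuspidalCrossCap (0, 0) := by
  refine germEquiv_cuspidalCrossCap_of_hasDerivAt hZ (SmoothNear.comp hC hT) hZC ?_
    (hasDerivAt_fderiv_comp hT hC hC' hC'' _) (mul_ne_zero (mul_ne_zero hd hTu) hTv)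
  have hCT := (hC.contDiffAt.differentiableAt (by simp)).hasDerivAt.comp_hasFDerivAt _
    (hT.contDiffAt.differentiableAt (by simp)).hasFDerivAt
  simp [hCT.fderiv, hC']

theorem germEquiv_cuspidalCrossCap_of_adapted (hx : ContDiff ℝ ∞ x) (hy : ContDiff ℝ ∞ y)
    (hz : ContDiff ℝ ∞ z) (hxt : deriv x t ≠ 0) (hyt : deriv y t = 0)
    (hyt' : 0 < deriv (deriv y) t) (hzt : deriv z t = 0) (hzt' : deriv (deriv z) t = 0)
    (hzt'' : deriv (deriv (deriv z)) t = 0) (hzt''' : deriv (deriv (deriv (deriv z))) t ≠ 0) :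
    GermEquiv (fun q ↦ ![tangentSurface x q, tangentSurface y q, tangentSurface z q]) (t, 0)
      cuspidalCrossCap (0, 0) := by
  obtain ⟨a, κ, b, c, ha, hb, hc, hκ, hκd, hκt, hxκ, hyκ⟩ :=
    exists_foldCoordinates hx hy hxt hyt hyt'
  obtain ⟨C, d, hC, hC', hC'', hd, hzC⟩ := exists_smoothNear_deriv_eq_add hx hy hz hxt hyt hyt'.ne'
    hzt hzt' hzt'' hzt'''
  refine (germEquiv_of_eq_sub_sq hκ ha (Eventually.of_forall hxκ) hyκ).trans ?_
  set ρ := hκ.localInverse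
  have hρ : SmoothNear ρ (x t, 0) := hκt ▸ smoothNear_localInverse hκ
  have hρt : ρ (x t, 0) = (t, 0) := hκt ▸ hκ.localInverse_left_inv hκ.localInverse_mem_target
  have hκρ : ∀ᶠ q in 𝓝 (x t, 0), κ (ρ q) = q := hκt ▸ hκ.localInverse_eventuallyEq_right
  have hlim : Tendsto ρ (𝓝 (x t, 0)) (𝓝 (t, 0)) := hρt ▸ hρ.continuousAt
  have hTt : (ρ (x t, 0)).1 = t := by rw [hρt]
  obtain ⟨hTu, hTv⟩ := fderiv_fst_localInverse_ne_zero hb hc hκ hκd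
  have hB' : deriv (fun r ↦ -2 * C r) = fun r ↦ -2 * deriv C r :=
    funext fun r ↦ deriv_const_mul_field _
  have hB'' : HasDerivAt (deriv fun r ↦ -2 * C r) (-2 * d) t := hB' ▸ hC''.const_mul (-2)
  rw [hκt] at hTu hTv ⊢
  refine germEquiv_cuspidalCrossCap_of_hasDerivAt_comp
    (SmoothNear.comp (.of_contDiff (contDiff_tangentSurface hz)) hρ)
    (hρ.mono fun q hq ↦ hq.fst) hTu hTv (hTt ▸ hC.mono fun r hr ↦ contDiffAt_const.mul hr)
    (by simp [hTt, hC']) (hTt ▸ hB'') (mul_ne_zero (by norm_num) hd) ?_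
  filter_upwards [hρ, hlim.eventually (continuous_fst.continuousAt.eventually hzC),
    hκρ.eventually_nhds, (hlim.eventually hyκ).eventually_nhds] with q hρq ⟨m, hm, hm'⟩ hκq hyq
  have hdiff {w : ℝ → ℝ} (hw : ContDiff ℝ ∞ w) : DifferentiableAt ℝ (tangentSurface w) (ρ q) :=
    (hasFDerivAt_tangentSurface hw _).differentiableAt
  refine hasDerivAt_comp_of_fderiv_eq_add (a := a) (hρq.differentiableAt (by simp))
    (hdiff hx) (hdiff hy) (hdiff hz) (fderiv_tangentSurface_eq hx hy hz hm hm')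
    (hκq.mono fun p hp ↦ by rw [hxκ, hp]) ?_
  filter_upwards [hκq, hyq] with p hκp hyp
  rw [hyp, hxκ, hκp]

end AdaptedCurve

section Reduction

variable {E F : Type*} [NormedAddCommGroup E] [NormedSpace ℝ E] [NormedAddCommGroup F]
  [NormedSpace ℝ F] {γ : ℝ → E} {t : ℝ}

lemma tangentSurface_eventuallyEq {δ : ℝ → E} {p : ℝ × ℝ} (h : γ =ᶠ[𝓝 p.1] δ) :
    tangentSurface γ =ᶠ[𝓝 p] tangentSurface δ := by
  filter_upwards [continuous_fst.continuousAt.eventually h,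
    continuous_fst.continuousAt.eventually h.deriv] with q hq hq'
  rw [tangentSurface, tangentSurface, hq, hq']

lemma iterate_deriv_continuousLinearMap_comp (L : E →L[ℝ] F) (hγ : ContDiff ℝ ∞ γ) (n : ℕ) :
    deriv^[n] (L ∘ γ) = L ∘ deriv^[n] γ := by
  induction n generalizing γ with
  | zero => rfl
  | succ n ih =>
    have hLγ : deriv (L ∘ γ) = L ∘ deriv γ :=
      funext fun r ↦ (L.hasFDerivAt.comp_hasDerivAt r (hasDerivAt_of_contDiff hγ r)).deriv
    rw [Function.iterate_succ_apply, hLγ, ih (contDiff_deriv hγ), Function.iterate_succ_apply]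

lemma tangentSurface_continuousLinearMap_comp (L : E →L[ℝ] F) (hγ : ContDiff ℝ ∞ γ) (p : ℝ × ℝ) :
    tangentSurface (L ∘ γ) p = L (tangentSurface γ p) := by
  have hLγ : deriv (L ∘ γ) = L ∘ deriv γ := iterate_deriv_continuousLinearMap_comp L hγ 1
  simp [tangentSurface, hLγ]

lemma exists_continuousLinearEquiv_apply_eq_single {ι : Type*} [Fintype ι] [Nonempty ι]
    [DecidableEq ι] [FiniteDimensional ℝ E] {v : ι → E} (hv : LinearIndependent ℝ v)
    (hι : Fintype.card ι = Module.finrank ℝ E) :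
    ∃ A : E ≃L[ℝ] ι → ℝ, ∀ j, A (v j) = Pi.single j 1 := by
  let B := basisOfLinearIndependentOfCardEqFinrank hv hι
  refine ⟨B.equivFunL, fun j ↦ ?_⟩
  have hBj : B j = v j := congrFun (coe_basisOfLinearIndependentOfCardEqFinrank hv hι) j
  ext i
  simp [← hBj, Finsupp.single_apply, Pi.single_apply, eq_comm]

lemma map_eq_zero_of_not_linearIndependent {K V W : Type*} [DivisionRing K] [AddCommGroup V]
    [Module K V] [AddCommGroup W] [Module K W] {n : ℕ} {v : Fin n → V} {w : V}
    (hv : LinearIndependent K v) (hw : ¬ LinearIndependent K (Fin.snoc v w : Fin (n + 1) → V))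
    (L : V →ₗ[K] W) (hL : ∀ i, L (v i) = 0) : L w = 0 := by
  have hspan : w ∈ Submodule.span K (range v) := by
    by_contra hmem
    exact hw (linearIndependent_finSnoc.2 ⟨hv, hmem⟩)
  have hker : Submodule.span K (range v) ≤ LinearMap.ker L :=
    Submodule.span_le.2 (range_subset_iff.2 hL)
  exact hker hspan

lemma map_deriv_three_eq_zero (L : E →L[ℝ] ℝ)
    (hdep : ¬ LinearIndependent ℝ ![deriv γ t, deriv (deriv γ) t, deriv (deriv (deriv γ)) t])
    (hind : LinearIndependent ℝ ![deriv γ t, deriv (deriv γ) t])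
    (h₁ : L (deriv γ t) = 0) (h₂ : L (deriv (deriv γ) t) = 0) :
    L (deriv (deriv (deriv γ)) t) = 0 := by
  have hsnoc : ![deriv γ t, deriv (deriv γ) t, deriv (deriv (deriv γ)) t] =
      Fin.snoc ![deriv γ t, deriv (deriv γ) t] (deriv (deriv (deriv γ)) t) := by
    ext i
    fin_cases i <;> rfl
  exact map_eq_zero_of_not_linearIndependent hind (hsnoc ▸ hdep) L.toLinearMap
    (Fin.forall_fin_two.2 ⟨h₁, h₂⟩)

theorem germEquiv_cuspidalCrossCap_of_contDiff (hE : Module.finrank ℝ E = 3)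
    (hγ : ContDiff ℝ ∞ γ)
    (hdep : ¬ LinearIndependent ℝ ![deriv γ t, deriv (deriv γ) t, deriv (deriv (deriv γ)) t])
    (hind : LinearIndependent ℝ
      ![deriv γ t, deriv (deriv γ) t, deriv (deriv (deriv (deriv γ))) t]) :
    GermEquiv (tangentSurface γ) (t, 0) cuspidalCrossCap (0, 0) := by
  have : FiniteDimensional ℝ E := .of_finrank_pos (by lia)
  have := FiniteDimensional.complete ℝ E
  obtain ⟨A, hA⟩ := exists_continuousLinearEquiv_apply_eq_single hind (by simp [hE])
  have hA₁ : A (deriv γ t) = Pi.single 0 1 := hA 0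
  have hA₂ : A (deriv (deriv γ) t) = Pi.single 1 1 := hA 1
  have hA₄ : A (deriv (deriv (deriv (deriv γ))) t) = Pi.single 2 1 := hA 2
  let coord (i : Fin 3) : E →L[ℝ] ℝ := (ContinuousLinearMap.proj i).comp (A : E →L[ℝ] Fin 3 → ℝ)
  have hind₂ : LinearIndependent ℝ ![deriv γ t, deriv (deriv γ) t] := by
    convert hind.comp ![0, 1] (by decide) using 1
    ext i
    fin_cases i <;> rfl
  have hA₃ : coord 2 (deriv (deriv (deriv γ)) t) = 0 :=
    map_deriv_three_eq_zero _ hdep hind₂ (by simp [coord, hA₁]) (by simp [coord, hA₂])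
  have hsmooth (i : Fin 3) : ContDiff ℝ ∞ (coord i ∘ γ) := (coord i).contDiff.comp hγ
  have hcoord (n : ℕ) (i : Fin 3) : deriv^[n] (coord i ∘ γ) t = coord i (deriv^[n] γ t) :=
    congrFun (iterate_deriv_continuousLinearMap_comp _ hγ n) t
  have hAdiffeo : IsLocalDiffeomorphAt 𝓘(ℝ, E) 𝓘(ℝ, Fin 3 → ℝ) ∞ A (tangentSurface γ (t, 0)) :=
    isLocalDiffeomorphAt_of_hasFDerivAt (.of_contDiff A.contDiff) A.hasFDerivAt
  refine (GermEquiv.of_target_eq hAdiffeo (Eventually.of_forall fun q ↦ ?_)).trans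
    (germEquiv_cuspidalCrossCap_of_adapted (hsmooth 0) (hsmooth 1) (hsmooth 2)
      ((hcoord 1 0).trans_ne ?_) ((hcoord 1 1).trans ?_) (lt_of_lt_of_eq ?_ (hcoord 2 1).symm)
      ((hcoord 1 2).trans ?_) ((hcoord 2 2).trans ?_) ((hcoord 3 2).trans hA₃)
      ((hcoord 4 2).trans_ne ?_))
  · ext i
    fin_cases i <;> exact (tangentSurface_continuousLinearMap_comp (coord _) hγ q).symm
  all_goals simp [coord, hA₁, hA₂, hA₄]

theorem germEquiv_cuspidalCrossCap_of_smoothNear (hE : Module.finrank ℝ E = 3)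
    (hγ : SmoothNear γ t)
    (hdep : ¬ LinearIndependent ℝ ![deriv γ t, deriv (deriv γ) t, deriv (deriv (deriv γ)) t])
    (hind : LinearIndependent ℝ
      ![deriv γ t, deriv (deriv γ) t, deriv (deriv (deriv (deriv γ))) t]) :
    GermEquiv (tangentSurface γ) (t, 0) cuspidalCrossCap (0, 0) := by
  obtain ⟨δ, hδ, -, hδγ⟩ := hγ.exists_contDiff_hasCompactSupport
  have hsurface : tangentSurface γ =ᶠ[𝓝 (t, 0)] tangentSurface δ :=
    tangentSurface_eventuallyEq hδγ.symm
  have h₁ : deriv δ t = deriv γ t := hδγ.deriv_eq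
  have h₂ : deriv (deriv δ) t = deriv (deriv γ) t := hδγ.deriv.deriv_eq
  refine (GermEquiv.of_eventuallyEq hsurface).trans
    (germEquiv_cuspidalCrossCap_of_contDiff hE hδ ?_ ?_)
  · rwa [h₁, h₂, hδγ.deriv.deriv.deriv_eq]
  · rwa [h₁, h₂, hδγ.deriv.deriv.deriv.deriv_eq]

lemma continuousAt_tangentSurface (hγ : SmoothNear γ t) (s : ℝ) :
    ContinuousAt (tangentSurface γ) (t, s) := by
  obtain ⟨δ, hδ, -, hδγ⟩ := hγ.exists_contDiff_hasCompactSupport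
  exact (contDiff_tangentSurface hδ).continuous.continuousAt.congr
    (tangentSurface_eventuallyEq hδγ)

end Reduction

section FoldedUmbrella

/-- The folded umbrella `(t, s) ↦ (t + s, t² + 2 s t, t⁴ + 4 s t³)`. -/
def foldedUmbrella (p : ℝ × ℝ) : Fin 3 → ℝ :=
  ![p.1 + p.2, p.1 ^ 2 + 2 * p.2 * p.1, p.1 ^ 4 + 4 * p.2 * p.1 ^ 3]

theorem germEquiv_cuspidalCrossCap_foldedUmbrella :
    GermEquiv cuspidalCrossCap (0, 0) foldedUmbrella (0, 0) := by
  -- With `u = t + s` and `v = s`: `t² + 2st = u² - v²` and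
  -- `t⁴ + 4st³ = (u - v)³(u + 3v) = u⁴ - 6u²v² + 8uv³ - 3v⁴`.
  let σ (p : ℝ × ℝ) : ℝ × ℝ := (p.1 - p.2, p.2)
  let τ (X : Fin 3 → ℝ) : Fin 3 → ℝ :=
    ![X 0, X 0 ^ 2 - X 1, X 0 ^ 4 - 6 * X 0 ^ 2 * X 1 + 8 * X 2 - 3 * X 1 ^ 2]
  let τinv (Y : Fin 3 → ℝ) : Fin 3 → ℝ :=
    ![Y 0, Y 0 ^ 2 - Y 1,
      (Y 2 - Y 0 ^ 4 + 6 * Y 0 ^ 2 * (Y 0 ^ 2 - Y 1) + 3 * (Y 0 ^ 2 - Y 1) ^ 2) / 8]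
  have hσ (p : ℝ × ℝ) : IsLocalDiffeomorphAt 𝓘(ℝ, ℝ × ℝ) 𝓘(ℝ, ℝ × ℝ) ∞ σ p :=
    isLocalDiffeomorphAt_of_inverse (ρ := fun p ↦ (p.1 + p.2, p.2)) (by fun_prop) (by fun_prop)
      (fun p ↦ by simp [σ]) (fun p ↦ by simp [σ]) p
  have hτsmooth : ContDiff ℝ ∞ τ := contDiff_pi.2 fun i ↦ by
    fin_cases i <;> dsimp [τ] <;> fun_prop
  have hτinvsmooth : ContDiff ℝ ∞ τinv := contDiff_pi.2 fun i ↦ by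
    fin_cases i <;> dsimp [τinv] <;> fun_prop
  have hτ (X : Fin 3 → ℝ) : IsLocalDiffeomorphAt 𝓘(ℝ, Fin 3 → ℝ) 𝓘(ℝ, Fin 3 → ℝ) ∞ τ X := by
    refine isLocalDiffeomorphAt_of_inverse hτsmooth hτinvsmooth (fun X ↦ ?_) (fun Y ↦ ?_) X <;>
    · ext i
      fin_cases i <;> simp [τ, τinv]
      ring
  refine ⟨σ, τ, hσ _, hτ _, by simp [σ], Eventually.of_forall fun p ↦ ?_⟩
  ext i
  fin_cases i <;> simp [σ, τ, cuspidalCrossCap, foldedUmbrella]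
  all_goals ring

theorem euclidean_tangent_surface_folded_umbrella_general {E : Type*} [NormedAddCommGroup E]
    [NormedSpace ℝ E] (hE : Module.finrank ℝ E = 3) {γ : ℝ → E} {t : ℝ} (hγ : SmoothNear γ t)
    (hdep : ¬ LinearIndependent ℝ ![deriv γ t, deriv (deriv γ) t, deriv (deriv (deriv γ)) t])
    (hind : LinearIndependent ℝ
      ![deriv γ t, deriv (deriv γ) t, deriv (deriv (deriv (deriv γ))) t]) :
    GermEquiv (tangentSurface γ) (t, 0) foldedUmbrella (0, 0) :=
  (germEquiv_cuspidalCrossCap_of_smoothNear hE hγ hdep hind).trans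
    germEquiv_cuspidalCrossCap_foldedUmbrella

end FoldedUmbrella

end

/-- For a `C^∞` curve `γ : I → ℝ³` on an open interval, if
`γ'(t₀), γ''(t₀), γ'''(t₀)` are linearly dependent while `γ'(t₀), γ''(t₀), γ⁽⁴⁾(t₀)`
are linearly independent, then the tangent surface `f(t,s) = γ(t) + s γ'(t)` is, as a
germ at `(t₀, 0)`, diffeomorphic to the folded umbrella
`(t,s) ↦ (t+s, t²+2st, t⁴+4st³)`. -/
theorem euclidean_tangent_surface_folded_umbrella
    (I : Set ℝ) (hI : IsOpen I) (hI' : I.OrdConnected)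
    (γ : ℝ → Fin 3 → ℝ) (hγ : ContDiffOn ℝ (⊤ : ℕ∞) γ I)
    (t₀ : ℝ) (ht₀ : t₀ ∈ I)
    (hdep : ¬ LinearIndependent ℝ
      ![deriv γ t₀, deriv (deriv γ) t₀, deriv (deriv (deriv γ)) t₀])
    (hind : LinearIndependent ℝ
      ![deriv γ t₀, deriv (deriv γ) t₀, deriv (deriv (deriv (deriv γ))) t₀]) :
    GermDiffeomorphic
      (fun p : ℝ × ℝ => γ p.1 + p.2 • deriv γ p.1) (t₀, (0 : ℝ))
      (fun p : ℝ × ℝ =>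
        ![p.1 + p.2, p.1 ^ 2 + 2 * p.2 * p.1, p.1 ^ 4 + 4 * p.2 * p.1 ^ 3])
      ((0 : ℝ), (0 : ℝ)) := by
  have hsmooth : SmoothNear γ t₀ := by
    filter_upwards [hI.mem_nhds ht₀] with t ht using hγ.contDiffAt (hI.mem_nhds ht)
  exact (euclidean_tangent_surface_folded_umbrella_general (by simp) hsmooth hdep
    hind).germDiffeomorphic (continuousAt_tangentSurface hsmooth 0)
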